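/- arXiv:1308.5695 — 5 statements merged into one kernel-verified Lean document; each statement's English description precedes it below -/
import Mathlib

section
/- Let n ≥ 1, let p ∈ (−1/n, 0) ∪ (0, ∞), and let q be defined by 1/q = 1/p + n. If w : ℝⁿ → [0,∞) is a measurable p-concave function, then the measure μ with density w with respect to Lebesgue measure is q-concave: for all Borel sets A, B ⊆ ℝⁿ with μ(A)·μ(B) > 0 and all λ ∈ (0,1), μ_*(λA+(1−λ)B) ≥ (λ·μ(A)^q + (1−λ)·μ(B)^q)^{1/q}. -/
open MeasureTheory Set Filter
open scoped Pointwise ENNReal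

/-- The inner measure induced by a measure `μ`:
`μ_*(S) = sup {μ(F) : F ⊆ S Borel}`. -/
noncomputable def innerMeasure {α : Type*} [MeasurableSpace α] (μ : Measure α) (S : Set α) :
    ℝ≥0∞ :=
  ⨆ (F : Set α) (_ : MeasurableSet F) (_ : F ⊆ S), μ F

/-- The weighted power mean `(l a ^ p + (1 - l) b ^ p) ^ (1 / p)` on `[0, ∞]`. -/
noncomputable def powerMean (p l : ℝ) (a b : ℝ≥0∞) : ℝ≥0∞ :=
  (ENNReal.ofReal l * a ^ p + ENNReal.ofReal (1 - l) * b ^ p) ^ (1 / p)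

theorem ENNReal.rpow_le_rpow_of_exponent_neg {x y : ℝ≥0∞} {z : ℝ} (hxy : x ≤ y) (hz : z < 0) :
    y ^ z ≤ x ^ z := by
  obtain ⟨t, rfl⟩ : ∃ t, z = -t := ⟨-z, (neg_neg z).symm⟩
  rw [ENNReal.rpow_neg, ENNReal.rpow_neg]
  exact ENNReal.inv_le_inv.2 (ENNReal.rpow_le_rpow hxy (by linarith))

theorem powerMean_mono {p l : ℝ} (hp : p ≠ 0) {a a' b b' : ℝ≥0∞} (ha : a ≤ a') (hb : b ≤ b') :
    powerMean p l a b ≤ powerMean p l a' b' := by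
  unfold powerMean
  rcases lt_or_gt_of_ne hp with h | h
  · refine ENNReal.rpow_le_rpow_of_exponent_neg ?_ (one_div_neg.2 h)
    gcongr ENNReal.ofReal l * ?_ + ENNReal.ofReal (1 - l) * ?_
    · exact ENNReal.rpow_le_rpow_of_exponent_neg ha h
    · exact ENNReal.rpow_le_rpow_of_exponent_neg hb h
  · have := one_div_pos.2 h
    gcongr

theorem powerMean_mul_left {p l : ℝ} (hp : p ≠ 0) {s : ℝ≥0∞} (hs0 : s ≠ 0) (hs : s ≠ ∞)
    (a b : ℝ≥0∞) : powerMean p l (s * a) (s * b) = s * powerMean p l a b := by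
  have h : ∀ (x : ℝ≥0∞), (s * x) ^ p = s ^ p * x ^ p := fun x => by
    simp [ENNReal.mul_rpow_eq_ite, hs0, hs]
  have hsp0 : s ^ p ≠ 0 := by simp [ENNReal.rpow_eq_zero_iff, hs0, hs]
  have hsp : s ^ p ≠ ∞ := by simp [ENNReal.rpow_eq_top_iff, hs0, hs]
  simp only [powerMean]
  rw [h a, h b, mul_left_comm, mul_left_comm (ENNReal.ofReal (1 - l)), ← mul_add,
    ENNReal.mul_rpow_eq_ite, one_div, ENNReal.rpow_rpow_inv hp]
  simp [hsp0, hsp]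

theorem tendsto_powerMean {ι : Type*} {F : Filter ι} {p l : ℝ} {a b : ι → ℝ≥0∞} {a₀ b₀ : ℝ≥0∞}
    (ha : Tendsto a F (nhds a₀)) (hb : Tendsto b F (nhds b₀)) :
    Tendsto (fun i => powerMean p l (a i) (b i)) F (nhds (powerMean p l a₀ b₀)) := by
  have hr : ∀ y : ℝ, Continuous fun x : ℝ≥0∞ => x ^ y := fun y => ENNReal.continuous_rpow_const
  exact ((hr _).tendsto _).comp
    ((ENNReal.Tendsto.const_mul (((hr p).tendsto _).comp ha) (Or.inr ENNReal.ofReal_ne_top)).add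
      (ENNReal.Tendsto.const_mul (((hr p).tendsto _).comp hb) (Or.inr ENNReal.ofReal_ne_top)))

theorem powerMean_ofReal {p l a b : ℝ} (hl : l ∈ Ioo (0 : ℝ) 1) (ha : 0 < a) (hb : 0 < b) :
    powerMean p l (ENNReal.ofReal a) (ENNReal.ofReal b) =
      ENNReal.ofReal ((l * a ^ p + (1 - l) * b ^ p) ^ (1 / p)) := by
  have h1 : 0 < 1 - l := sub_pos.2 hl.2
  have h0 : 0 < l := hl.1
  rw [powerMean, ENNReal.ofReal_rpow_of_pos ha, ENNReal.ofReal_rpow_of_pos hb,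
    ← ENNReal.ofReal_mul h0.le, ← ENNReal.ofReal_mul h1.le,
    ← ENNReal.ofReal_add (by positivity) (by positivity), ENNReal.ofReal_rpow_of_pos (by positivity)]

theorem Real.one_add_mul_sub_one_le_rpow_of_neg {t q : ℝ} (ht : 0 < t) (hq : q < 0) :
    1 + q * (t - 1) ≤ t ^ q := by
  rw [Real.rpow_def_of_pos ht]
  have h1 := Real.add_one_le_exp (Real.log t * q)
  have h2 := Real.log_le_sub_one_of_pos ht
  nlinarith

theorem Real.powerMean_mul_le {p l a b c d : ℝ} (hp0 : p ≠ 0) (hp : 0 < 1 + p)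
    (hl : l ∈ Ioo (0 : ℝ) 1) (ha : 0 < a) (hb : 0 < b) (hc : 0 < c) (hd : 0 < d) :
    (l * (a * c) ^ (p / (1 + p)) + (1 - l) * (b * d) ^ (p / (1 + p))) ^ (1 / (p / (1 + p))) ≤
      (l * a ^ p + (1 - l) * b ^ p) ^ (1 / p) * (l * c + (1 - l) * d) := by
  have h0 : 0 < l := hl.1
  have h1 : 0 < 1 - l := sub_pos.2 hl.2
  set q := p / (1 + p) with hq
  set S := l * a ^ p + (1 - l) * b ^ p with hS
  set D := l * c + (1 - l) * d with hD
  have hSpos : 0 < S := by positivity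
  have hDpos : 0 < D := by positivity
  have hq0 : q ≠ 0 := div_ne_zero hp0 hp.ne'
  have key : ∀ x y : ℝ, 0 < x → 0 < y →
      (x * y) ^ q = S ^ (1 - q) * D ^ q * (x ^ p / S * ((y / D) / (x ^ p / S)) ^ q) := by
    intro x y hx hy
    have e : x ^ q = (x ^ p) ^ (1 - q) := by
      rw [← Real.rpow_mul hx.le]
      congr 1
      rw [hq]; field_simp; ring
    rw [Real.mul_rpow hx.le hy.le, e, Real.div_rpow (by positivity) (by positivity),
      Real.div_rpow hy.le hDpos.le, Real.div_rpow (by positivity) hSpos.le,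
      Real.rpow_sub hSpos, Real.rpow_sub (by positivity : 0 < x ^ p), Real.rpow_one, Real.rpow_one]
    field_simp
  have lin : ∀ x y : ℝ, 0 < x → 0 < y →
      x ^ p / S * (1 + q * ((y / D) / (x ^ p / S) - 1)) = (1 - q) * (x ^ p / S) + q * (y / D) := by
    intro x y hx hy
    field_simp
    ring
  have tot : l * ((1 - q) * (a ^ p / S) + q * (c / D)) +
      (1 - l) * ((1 - q) * (b ^ p / S) + q * (d / D)) = 1 := by
    have e : l * ((1 - q) * (a ^ p / S) + q * (c / D)) +
      (1 - l) * ((1 - q) * (b ^ p / S) + q * (d / D)) = (1 - q) * (S / S) + q * (D / D) := by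
      conv_rhs => rw [hS, hD]
      ring
    rw [e, div_self hSpos.ne', div_self hDpos.ne']
    ring
  have out : (S ^ (1 - q) * D ^ q) ^ (1 / q) = S ^ (1 / p) * D := by
    rw [Real.mul_rpow (by positivity) (by positivity), ← Real.rpow_mul hSpos.le,
      ← Real.rpow_mul hDpos.le, mul_one_div_cancel hq0, Real.rpow_one]
    congr 2
    rw [hq]; field_simp; ring
  rw [← out, key a c ha hc, key b d hb hd]
  rw [← lin a c ha hc, ← lin b d hb hd] at tot
  have hK : 0 < S ^ (1 - q) * D ^ q := by positivity
  have fac : ∀ K X Y : ℝ, l * (K * X) + (1 - l) * (K * Y) = K * (l * X + (1 - l) * Y) := by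
    intros; ring
  rw [fac]
  rcases lt_or_gt_of_ne hp0 with hneg | hpos
  · have hqneg : q < 0 := div_neg_of_neg_of_pos hneg hp
    refine Real.rpow_le_rpow_of_nonpos hK ?_ (one_div_neg.2 hqneg).le
    refine le_mul_of_one_le_right hK.le ?_
    refine tot.symm.trans_le ?_
    gcongr <;> exact Real.one_add_mul_sub_one_le_rpow_of_neg (by positivity) hqneg
  · have hqpos : 0 < q := div_pos hpos hp
    have hq1 : q ≤ 1 := by rw [hq, div_le_one hp]; linarith
    refine Real.rpow_le_rpow (by positivity) ?_ (one_div_pos.2 hqpos).le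
    refine mul_le_of_le_one_right hK.le ?_
    refine le_of_le_of_eq ?_ tot
    have bern : ∀ t : ℝ, 0 < t → t ^ q ≤ 1 + q * (t - 1) := fun t ht => by
      have := _root_.rpow_one_add_le_one_add_mul_self (s := t - 1) (by linarith) hqpos.le hq1
      simpa using this
    gcongr <;> exact bern _ (by positivity)

theorem powerMean_mul_le {p l : ℝ} (hp0 : p ≠ 0) (hp : 0 < 1 + p) (hl : l ∈ Ioo (0 : ℝ) 1)
    {a b c d : ℝ≥0∞} (ha : a ≠ 0) (ha' : a ≠ ∞) (hb : b ≠ 0) (hb' : b ≠ ∞) (hc : c ≠ 0)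
    (hc' : c ≠ ∞) (hd : d ≠ 0) (hd' : d ≠ ∞) :
    powerMean (p / (1 + p)) l (a * c) (b * d) ≤
      powerMean p l a b * (ENNReal.ofReal l * c + ENNReal.ofReal (1 - l) * d) := by
  have h0 : 0 < l := hl.1
  have h1 : 0 < 1 - l := sub_pos.2 hl.2
  have pos : ∀ {x : ℝ≥0∞}, x ≠ 0 → x ≠ ∞ → 0 < x.toReal := fun h h' => ENNReal.toReal_pos h h'
  have pa := pos ha ha'
  have pb := pos hb hb'
  have pc := pos hc hc'
  have pd := pos hd hd'
  rw [← ENNReal.ofReal_toReal ha', ← ENNReal.ofReal_toReal hb', ← ENNReal.ofReal_toReal hc',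
    ← ENNReal.ofReal_toReal hd', ← ENNReal.ofReal_mul pa.le, ← ENNReal.ofReal_mul pb.le,
    powerMean_ofReal hl (by positivity) (by positivity), powerMean_ofReal hl pa pb,
    ← ENNReal.ofReal_mul h0.le, ← ENNReal.ofReal_mul h1.le,
    ← ENNReal.ofReal_add (by positivity) (by positivity), ← ENNReal.ofReal_mul (by positivity)]
  exact ENNReal.ofReal_le_ofReal (Real.powerMean_mul_le hp0 hp hl pa pb pc pd)

theorem IsCompact.volume_add_volume_le_volume_add {K L : Set ℝ} (hK : IsCompact K)
    (hL : IsCompact L) (hK0 : K.Nonempty) (hL0 : L.Nonempty) :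
    volume K + volume L ≤ volume (K + L) := by
  obtain ⟨α, hα, hαmax⟩ := hK.exists_isGreatest hK0
  obtain ⟨β, hβ, hβmin⟩ := hL.exists_isLeast hL0
  have hsub : (fun x => x + β) '' K ∪ (fun x => α + x) '' L ⊆ K + L := by
    rintro _ (⟨x, hx, rfl⟩ | ⟨x, hx, rfl⟩)
    · exact add_mem_add hx hβ
    · exact add_mem_add hα hx
  have hdisj : AEDisjoint volume ((fun x => x + β) '' K) ((fun x => α + x) '' L) := by
    refine measure_mono_null (t := {α + β}) ?_ Real.volume_singleton
    rintro _ ⟨⟨x, hx, rfl⟩, ⟨y, hy, hxy⟩⟩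
    have h1 := hαmax hx
    have h2 := hβmin hy
    simp only [mem_singleton_iff] at hxy ⊢
    linarith
  calc volume K + volume L
      = volume ((fun x => x + β) '' K) + volume ((fun x => α + x) '' L) := by
        simp [image_add_left, image_add_right]
    _ = volume ((fun x => x + β) '' K ∪ (fun x => α + x) '' L) :=
        (measure_union₀ (hL.image (by fun_prop)).measurableSet.nullMeasurableSet hdisj).symm
    _ ≤ volume (K + L) := measure_mono hsub

theorem MeasurableSet.volume_add_volume_le_volume_add {A B : Set ℝ} (hA : MeasurableSet A)
    (hB : MeasurableSet B) (hA0 : A.Nonempty) (hB0 : B.Nonempty) :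
    volume A + volume B ≤ volume (A + B) := by
  have approx : ∀ {s : Set ℝ}, MeasurableSet s → s.Nonempty → ∀ c : ℝ≥0∞,
      (∀ K ⊆ s, IsCompact K → K.Nonempty → volume K + c ≤ volume (A + B)) →
        volume s + c ≤ volume (A + B) := by
    intro s hs hs0 c h
    have hall : ∀ K ⊆ s, IsCompact K → volume K + c ≤ volume (A + B) := by
      intro K hKs hK
      rcases K.eq_empty_or_nonempty with rfl | hK0
      · obtain ⟨x, hx⟩ := hs0
        simpa using h {x} (singleton_subset_iff.2 hx) isCompact_singleton (singleton_nonempty x)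
      · exact h K hKs hK hK0
    rw [hs.measure_eq_iSup_isCompact]
    simpa [iSup_and] using ENNReal.biSup_add_biSup_le' (p := fun K => K ⊆ s ∧ IsCompact K)
      (q := fun _ : Unit => True) (f := fun K => volume K) (g := fun _ => c)
      ⟨∅, empty_subset s, isCompact_empty⟩ ⟨(), trivial⟩ fun K hK _ _ => hall K hK.1 hK.2
  refine approx hA hA0 _ fun K hKA hK hK0 => ?_
  rw [add_comm]
  refine approx hB hB0 _ fun L hLB hL hL0 => ?_
  rw [add_comm]
  exact (hK.volume_add_volume_le_volume_add hL hK0 hL0).trans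
    (measure_mono (add_subset_add hKA hLB))

theorem lintegral_add_lintegral_le_of_min_le {l : ℝ} (hl : l ∈ Ioo (0 : ℝ) 1) {f g : ℝ → ℝ}
    {h : ℝ → ℝ≥0∞} (hf : Measurable f) (hg : Measurable g) (hh : Measurable h)
    (hf0 : ∀ x, 0 ≤ f x) (hg0 : ∀ x, 0 ≤ g x) (hf1 : ∀ x, f x ≤ 1) (hg1 : ∀ x, g x ≤ 1)
    (hfs : ∀ t < 1, ∃ x, t < f x) (hgs : ∀ t < 1, ∃ x, t < g x)
    (H : ∀ x y, 0 < f x → 0 < g y → ENNReal.ofReal (min (f x) (g y)) ≤ h (l * x + (1 - l) * y)) :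
    ENNReal.ofReal l * (∫⁻ x, ENNReal.ofReal (f x)) +
      ENNReal.ofReal (1 - l) * (∫⁻ x, ENNReal.ofReal (g x)) ≤ ∫⁻ x, h x := by
  have h0 : 0 < l := hl.1
  have h1 : 0 < 1 - l := sub_pos.2 hl.2
  set k : ℝ → ℝ := fun x => (min (h x) 1).toReal with hk
  have hkm : Measurable k := (hh.min measurable_const).ennreal_toReal
  have hkh : ∫⁻ x, ENNReal.ofReal (k x) ≤ ∫⁻ x, h x := by
    refine lintegral_mono fun x => ?_
    exact ENNReal.ofReal_toReal_le.trans (min_le_left _ _)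
  refine le_trans ?_ hkh
  have anti : ∀ F : ℝ → ℝ, Measurable fun t => volume {x | t < F x} := fun F =>
    Antitone.measurable fun s t hst => measure_mono fun x (hx : t < F x) => lt_of_le_of_lt hst hx
  rw [lintegral_eq_lintegral_meas_lt _ (ae_of_all _ hf0) hf.aemeasurable,
    lintegral_eq_lintegral_meas_lt _ (ae_of_all _ hg0) hg.aemeasurable,
    lintegral_eq_lintegral_meas_lt _ (ae_of_all _ fun x => ENNReal.toReal_nonneg)
      hkm.aemeasurable, ← lintegral_const_mul _ (anti f), ← lintegral_const_mul _ (anti g),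
    ← lintegral_add_left ((anti f).const_mul _)]
  refine setLIntegral_mono (anti k) fun t (ht : 0 < t) => ?_
  rcases le_or_gt 1 t with ht1 | ht1
  · have ef : {x | t < f x} = ∅ := eq_empty_of_forall_notMem fun x (hx : t < f x) => by
      linarith [hf1 x]
    have eg : {x | t < g x} = ∅ := eq_empty_of_forall_notMem fun x (hx : t < g x) => by
      linarith [hg1 x]
    simp [ef, eg]
  have mf : MeasurableSet {x | t < f x} := measurableSet_lt measurable_const hf
  have mg : MeasurableSet {x | t < g x} := measurableSet_lt measurable_const hg
  have sub : l • {x | t < f x} + (1 - l) • {x | t < g x} ⊆ {x | t < k x} := by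
    rintro _ ⟨_, ⟨x, hx, rfl⟩, _, ⟨y, hy, rfl⟩, rfl⟩
    simp only [mem_ofPred_eq, smul_eq_mul] at hx hy ⊢
    have hm := H x y (ht.trans hx) (ht.trans hy)
    refine (lt_min hx hy).trans_le ?_
    rw [hk, ← ENNReal.ofReal_le_iff_le_toReal (by simp)]
    exact le_min hm (ENNReal.ofReal_le_one.2 ((min_le_left _ _).trans (hf1 x)))
  refine le_trans ?_ (measure_mono sub)
  refine le_trans (le_of_eq ?_) ((mf.const_smul₀ l).volume_add_volume_le_volume_add
    (mg.const_smul₀ (1 - l)) (Set.Nonempty.smul_set (hfs t ht1)) (Set.Nonempty.smul_set (hgs t ht1)))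
  simp [Measure.addHaar_smul, abs_of_pos h0, abs_of_pos h1]

theorem powerMean_lintegral_le_of_bounded {p l : ℝ} (hp0 : p ≠ 0) (hp : 0 < 1 + p)
    (hl : l ∈ Ioo (0 : ℝ) 1) {f g h : ℝ → ℝ≥0∞} (hf : Measurable f) (hg : Measurable g)
    (hh : Measurable h)
    (H : ∀ x y, f x ≠ 0 → g y ≠ 0 → powerMean p l (f x) (g y) ≤ h (l * x + (1 - l) * y))
    (hfb : ⨆ x, f x ≠ ∞) (hgb : ⨆ x, g x ≠ ∞) (hf0 : ∫⁻ x, f x ≠ 0) (hg0 : ∫⁻ x, g x ≠ 0)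
    (hfi : ∫⁻ x, f x ≠ ∞) (hgi : ∫⁻ x, g x ≠ ∞) :
    powerMean (p / (1 + p)) l (∫⁻ x, f x) (∫⁻ x, g x) ≤ ∫⁻ x, h x := by
  have sup0 : ∀ {F : ℝ → ℝ≥0∞}, ∫⁻ x, F x ≠ 0 → ⨆ x, F x ≠ 0 := by
    intro F hF h0
    refine hF ?_
    simp only [ENNReal.iSup_eq_zero] at h0
    simp [h0]
  have ha0 := sup0 hf0
  have hb0 := sup0 hg0
  have hfa : ∀ x, f x ≤ ⨆ x, f x := le_iSup f
  have hgb' : ∀ x, g x ≤ ⨆ x, g x := le_iSup g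
  have hfs : ∀ c < ⨆ x, f x, ∃ x, c < f x := fun c hc => lt_iSup_iff.1 hc
  have hgs : ∀ c < ⨆ x, g x, ∃ x, c < g x := fun c hc => lt_iSup_iff.1 hc
  generalize ha : ⨆ x, f x = a at *
  generalize hb : ⨆ x, g x = b at *
  have hM : powerMean p l a b ≠ 0 ∧ powerMean p l a b ≠ ∞ := by
    rw [← ENNReal.ofReal_toReal hfb, ← ENNReal.ofReal_toReal hgb,
      powerMean_ofReal hl (ENNReal.toReal_pos ha0 hfb) (ENNReal.toReal_pos hb0 hgb)]
    have := ENNReal.toReal_pos ha0 hfb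
    have := ENNReal.toReal_pos hb0 hgb
    have h0 : 0 < l := hl.1
    have h1 : 0 < 1 - l := sub_pos.2 hl.2
    refine ⟨?_, ENNReal.ofReal_ne_top⟩
    rw [Ne, ENNReal.ofReal_eq_zero, not_le]
    positivity
  set M := powerMean p l a b with hMdef
  have normalized : ∀ {F : ℝ → ℝ≥0∞} {c : ℝ≥0∞}, c ≠ 0 → c ≠ ∞ → (∀ x, F x ≤ c) →
      (∀ d < c, ∃ x, d < F x) → (∀ x, ENNReal.ofReal (F x / c).toReal = F x / c) ∧
      (∀ x, (F x / c).toReal ≤ 1) ∧ ∀ t < 1, ∃ x, t < (F x / c).toReal := by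
    intro F c hc0 hc hFc hFs
    have hle : ∀ x, F x / c ≤ 1 := fun x => ENNReal.div_le_of_le_mul (by simpa using hFc x)
    have hne : ∀ x, F x / c ≠ ∞ := fun x => ne_top_of_le_ne_top ENNReal.one_ne_top (hle x)
    refine ⟨fun x => ENNReal.ofReal_toReal (hne x), fun x => ?_, fun t ht => ?_⟩
    · exact ENNReal.toReal_le_of_le_ofReal zero_le_one (by simpa using hle x)
    · obtain ⟨x, hx⟩ := hFs (ENNReal.ofReal t * c) (by
        calc ENNReal.ofReal t * c < 1 * c :=
              ENNReal.mul_lt_mul_left hc0 hc (ENNReal.ofReal_lt_one.2 ht)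
          _ = c := one_mul c)
      refine ⟨x, ?_⟩
      rcases lt_or_ge t 0 with ht0 | ht0
      · exact ht0.trans_le ENNReal.toReal_nonneg
      · exact (ENNReal.ofReal_lt_iff_lt_toReal ht0 (hne x)).1
          ((ENNReal.lt_div_iff_mul_lt (Or.inl hc0) (Or.inl hc)).2 hx)
  obtain ⟨ef, hf1, hft⟩ := normalized ha0 hfb hfa hfs
  obtain ⟨eg, hg1, hgt⟩ := normalized hb0 hgb hgb' hgs
  have main := lintegral_add_lintegral_le_of_min_le hl (f := fun x => (f x / a).toReal)
    (g := fun x => (g x / b).toReal) (h := fun x => h x / M)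
    (hf.div_const a).ennreal_toReal (hg.div_const b).ennreal_toReal (hh.div_const M)
    (fun x => ENNReal.toReal_nonneg) (fun x => ENNReal.toReal_nonneg) hf1 hg1 hft hgt (by
      intro x y hx hy
      have hs0 : 0 < min (f x / a).toReal (g y / b).toReal := lt_min hx hy
      set s := min (f x / a).toReal (g y / b).toReal with hs
      rw [ENNReal.le_div_iff_mul_le (Or.inl hM.1) (Or.inl hM.2), hMdef,
        ← powerMean_mul_left hp0 (by simpa using hs0) ENNReal.ofReal_ne_top]
      have hfx : f x ≠ 0 := by rintro h0; simp [h0] at hx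
      have hgy : g y ≠ 0 := by rintro h0; simp [h0] at hy
      refine le_trans (powerMean_mono hp0 ?_ ?_) (H x y hfx hgy)
      · rw [← ENNReal.le_div_iff_mul_le (Or.inl ha0) (Or.inl hfb), ← ef x]
        exact ENNReal.ofReal_le_ofReal (min_le_left _ _)
      · rw [← ENNReal.le_div_iff_mul_le (Or.inl hb0) (Or.inl hgb), ← eg y]
        exact ENNReal.ofReal_le_ofReal (min_le_right _ _))
  simp only [ef, eg] at main
  simp only [div_eq_mul_inv] at main
  rw [lintegral_mul_const _ hf, lintegral_mul_const _ hg, lintegral_mul_const _ hh,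
    ← div_eq_mul_inv, ← div_eq_mul_inv, ← div_eq_mul_inv,
    ENNReal.le_div_iff_mul_le (Or.inl hM.1) (Or.inl hM.2), mul_comm] at main
  refine le_trans ?_ main
  have := powerMean_mul_le hp0 hp hl ha0 hfb hb0 hgb
    (ENNReal.div_ne_zero.2 ⟨hf0, hfb⟩) (ENNReal.div_ne_top hfi ha0)
    (ENNReal.div_ne_zero.2 ⟨hg0, hgb⟩) (ENNReal.div_ne_top hgi hb0)
  rwa [ENNReal.mul_div_cancel ha0 hfb, ENNReal.mul_div_cancel hb0 hgb] at this

theorem powerMean_lintegral_le {p l : ℝ} (hp0 : p ≠ 0) (hp : 0 < 1 + p)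
    (hl : l ∈ Ioo (0 : ℝ) 1) {f g h : ℝ → ℝ≥0∞} (hf : Measurable f) (hg : Measurable g)
    (hh : Measurable h)
    (H : ∀ x y, f x ≠ 0 → g y ≠ 0 → powerMean p l (f x) (g y) ≤ h (l * x + (1 - l) * y))
    (hf0 : ∫⁻ x, f x ≠ 0) (hg0 : ∫⁻ x, g x ≠ 0) :
    powerMean (p / (1 + p)) l (∫⁻ x, f x) (∫⁻ x, g x) ≤ ∫⁻ x, h x := by
  let T : (ℝ → ℝ≥0∞) → ℕ → ℝ → ℝ≥0∞ := fun F k =>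
    (Icc (-(k : ℝ)) k).indicator fun x => min (F x) k
  have hTm : ∀ {F}, Measurable F → ∀ k, Measurable (T F k) := fun hF k =>
    (hF.min measurable_const).indicator measurableSet_Icc
  have hTle : ∀ F k x, T F k x ≤ F x := fun F k x =>
    (indicator_le_self _ _ x).trans (min_le_left _ _)
  have hTk : ∀ F k x, T F k x ≤ (Icc (-(k : ℝ)) k).indicator (fun _ => (k : ℝ≥0∞)) x :=
    fun F k x => indicator_le_indicator (min_le_right (F x) (k : ℝ≥0∞))
  have hTmono : ∀ F x, Monotone fun k => T F k x := by
    intro F x i j hij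
    have hij' : (i : ℝ) ≤ j := Nat.cast_le.2 hij
    have hmin : min (F x) (i : ℝ≥0∞) ≤ min (F x) (j : ℝ≥0∞) :=
      min_le_min_left _ (Nat.cast_le.2 hij)
    exact (indicator_le_indicator_of_subset (Icc_subset_Icc (neg_le_neg hij') hij')
      (fun _ => zero_le) x).trans (indicator_le_indicator hmin)
  have hTlim : ∀ F x, Tendsto (fun k => T F k x) atTop (nhds (F x)) := by
    intro F x
    have h1 : Tendsto (fun k : ℕ => min (F x) (k : ℝ≥0∞)) atTop (nhds (min (F x) ∞)) :=
      tendsto_const_nhds.min ENNReal.tendsto_nat_nhds_top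
    rw [min_eq_left le_top] at h1
    refine h1.congr' ?_
    obtain ⟨N, hN⟩ := exists_nat_ge |x|
    filter_upwards [eventually_ge_atTop N] with k hk
    have : |x| ≤ k := hN.trans (Nat.cast_le.2 hk)
    exact (indicator_of_mem (s := Icc (-(k : ℝ)) k) (mem_Icc.2 (abs_le.1 this))
      fun x => min (F x) (k : ℝ≥0∞)).symm
  have hTint : ∀ {F}, Measurable F →
      Tendsto (fun k => ∫⁻ x, T F k x) atTop (nhds (∫⁻ x, F x)) := fun hF =>
    lintegral_tendsto_of_tendsto_of_monotone (fun k => (hTm hF k).aemeasurable)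
      (ae_of_all _ fun x => hTmono _ x) (ae_of_all _ fun x => hTlim _ x)
  have hTsup : ∀ F k, ⨆ x, T F k x ≠ ∞ := fun F k =>
    ne_top_of_le_ne_top (ENNReal.natCast_ne_top k)
      (iSup_le fun x => (hTk F k x).trans (indicator_le_self _ (fun _ => (k : ℝ≥0∞)) x))
  have hTfin : ∀ F k, ∫⁻ x, T F k x ≠ ∞ := fun F k => by
    refine ne_top_of_le_ne_top ?_ (lintegral_mono (hTk F k))
    rw [lintegral_indicator_const measurableSet_Icc, Real.volume_Icc]
    exact ENNReal.mul_ne_top (ENNReal.natCast_ne_top k) ENNReal.ofReal_ne_top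
  refine le_of_tendsto (tendsto_powerMean (hTint hf) (hTint hg)) ?_
  filter_upwards [(hTint hf).eventually_ne hf0, (hTint hg).eventually_ne hg0] with k hkf hkg
  refine powerMean_lintegral_le_of_bounded hp0 hp hl (hTm hf k) (hTm hg k) hh ?_
    (hTsup f k) (hTsup g k) hkf hkg (hTfin f k) (hTfin g k)
  intro x y hx hy
  exact (powerMean_mono hp0 (hTle f k x) (hTle g k y)).trans
    (H x y (fun h0 => hx (le_zero_iff.1 (h0 ▸ hTle f k x)))
      (fun h0 => hy (le_zero_iff.1 (h0 ▸ hTle g k y))))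

/-- The Borell--Brascamp--Lieb inequality. -/
theorem powerMean_lintegral_pi_le (n : ℕ) {p l : ℝ} (hp0 : p ≠ 0) (hp : 0 < 1 + n * p)
    (hl : l ∈ Ioo (0 : ℝ) 1) {f g h : (Fin n → ℝ) → ℝ≥0∞} (hf : Measurable f)
    (hg : Measurable g) (hh : Measurable h)
    (H : ∀ x y, f x ≠ 0 → g y ≠ 0 → powerMean p l (f x) (g y) ≤ h (l • x + (1 - l) • y))
    (hf0 : ∫⁻ x, f x ≠ 0) (hg0 : ∫⁻ x, g x ≠ 0) :
    powerMean (p / (1 + n * p)) l (∫⁻ x, f x) (∫⁻ x, g x) ≤ ∫⁻ x, h x := by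
  induction n generalizing p with
  | zero =>
    have hv : (volume : Measure (Fin 0 → ℝ)) univ = 1 := by
      simp [volume_pi]
    simp only [lintegral_unique, hv, mul_one] at hf0 hg0 ⊢
    have := H _ _ hf0 hg0
    simp only [Nat.cast_zero, zero_mul, add_zero, div_one]
    rwa [Subsingleton.elim (l • _ + (1 - l) • _)] at this
  | succ n ih =>
    have hn : (0 : ℝ) ≤ n := Nat.cast_nonneg n
    have hpn : 0 < 1 + n * p := by
      push_cast at hp
      rcases le_or_gt 0 p with h0 | h0
      · positivity
      · linarith
    set r := p / (1 + n * p) with hr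
    have hr0 : r ≠ 0 := div_ne_zero hp0 hpn.ne'
    have hr1 : 1 + r = (1 + (n + 1 : ℕ) * p) / (1 + n * p) := by
      rw [hr, eq_div_iff hpn.ne', add_mul, div_mul_cancel₀ _ hpn.ne']; push_cast; ring
    have hrr : p / (1 + (n + 1 : ℕ) * p) = r / (1 + r) := by
      rw [hr1, hr, div_div_div_cancel_right₀ hpn.ne']
    let e := (MeasurableEquiv.piFinSuccAbove (fun _ : Fin (n + 1) => ℝ) 0).symm
    have he : MeasurePreserving e :=
      (volume_preserving_piFinSuccAbove (fun _ : Fin (n + 1) => ℝ) 0).symm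
    have hlin : ∀ (s t : ℝ) (x y : Fin n → ℝ),
        e (l * s + (1 - l) * t, l • x + (1 - l) • y) = l • e (s, x) + (1 - l) • e (t, y) := by
      intro s t x y
      ext i
      refine Fin.cases ?_ (fun j => ?_) i <;>
        simp [e, MeasurableEquiv.piFinSuccAbove, Fin.insertNthEquiv]
    have fub : ∀ {F : (Fin (n + 1) → ℝ) → ℝ≥0∞}, Measurable F →
        ∫⁻ x, F x = ∫⁻ t : ℝ, ∫⁻ x : Fin n → ℝ, F (e (t, x)) := by
      intro F hF
      rw [← he.lintegral_comp hF, Measure.volume_eq_prod]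
      exact lintegral_prod _ (hF.comp e.measurable).aemeasurable
    have slice : ∀ {F : (Fin (n + 1) → ℝ) → ℝ≥0∞}, Measurable F → ∀ t : ℝ,
        Measurable fun x => F (e (t, x)) := fun hF t =>
      hF.comp (e.measurable.comp measurable_prodMk_left)
    have marg : ∀ {F : (Fin (n + 1) → ℝ) → ℝ≥0∞}, Measurable F →
        Measurable fun t : ℝ => ∫⁻ x : Fin n → ℝ, F (e (t, x)) := fun hF =>
      (hF.comp e.measurable).lintegral_prod_right'
    rw [fub hf] at hf0 ⊢
    rw [fub hg] at hg0 ⊢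
    rw [fub hh, hrr]
    refine powerMean_lintegral_le hr0 (by rw [hr1]; positivity) hl (marg hf) (marg hg) (marg hh)
      (fun s t hs ht => ?_) hf0 hg0
    refine ih hp0 hpn (slice hf s) (slice hg t) (slice hh _) (fun x y hx hy => ?_) hs ht
    rw [hlin]
    exact H _ _ hx hy

theorem powerMean_measure_le_of_isCompact (n : ℕ) {p l : ℝ} (hp0 : p ≠ 0) (hp : 0 < 1 + n * p)
    (hl : l ∈ Ioo (0 : ℝ) 1) {w : (Fin n → ℝ) → ℝ} (hwm : Measurable w)
    (hw : ∀ x y, 0 < w x * w y →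
      (l * w x ^ p + (1 - l) * w y ^ p) ^ (1 / p) ≤ w (l • x + (1 - l) • y))
    {K L : Set (Fin n → ℝ)} (hK : IsCompact K) (hL : IsCompact L)
    (hK0 : volume.withDensity (fun x => ENNReal.ofReal (w x)) K ≠ 0)
    (hL0 : volume.withDensity (fun x => ENNReal.ofReal (w x)) L ≠ 0) :
    powerMean (p / (1 + n * p)) l (volume.withDensity (fun x => ENNReal.ofReal (w x)) K)
        (volume.withDensity (fun x => ENNReal.ofReal (w x)) L) ≤
      volume.withDensity (fun x => ENNReal.ofReal (w x)) (l • K + (1 - l) • L) := by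
  have hS : MeasurableSet (l • K + (1 - l) • L) := ((hK.smul l).add (hL.smul (1 - l))).measurableSet
  have hwm' : Measurable fun x => ENNReal.ofReal (w x) := hwm.ennreal_ofReal
  have rep : ∀ {T : Set (Fin n → ℝ)}, MeasurableSet T →
      volume.withDensity (fun x => ENNReal.ofReal (w x)) T =
        ∫⁻ x, T.indicator (fun x => ENNReal.ofReal (w x)) x := fun hT => by
    rw [withDensity_apply _ hT, lintegral_indicator hT]
  rw [rep hK.measurableSet] at hK0 ⊢
  rw [rep hL.measurableSet] at hL0 ⊢
  rw [rep hS]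
  refine powerMean_lintegral_pi_le n hp0 hp hl (hwm'.indicator hK.measurableSet)
    (hwm'.indicator hL.measurableSet) (hwm'.indicator hS) (fun x y hx hy => ?_) hK0 hL0
  have hxK := mem_of_indicator_ne_zero hx
  have hyL := mem_of_indicator_ne_zero hy
  rw [indicator_of_mem hxK] at hx ⊢
  rw [indicator_of_mem hyL] at hy ⊢
  rw [indicator_of_mem (Set.add_mem_add (smul_mem_smul_set hxK) (smul_mem_smul_set hyL))]
  have hwx : 0 < w x := by simpa using hx
  have hwy : 0 < w y := by simpa using hy
  rw [powerMean_ofReal hl hwx hwy]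
  exact ENNReal.ofReal_le_ofReal (hw x y (mul_pos hwx hwy))

/-- Borell--Brascamp--Lieb: if `w` is a `p`-concave density with
`p ∈ (-1/n, 0) ∪ (0, ∞)` and `1/q = 1/p + n`, then `μ = w dx` is `q`-concave. -/
theorem stmt0 (n : ℕ) (hn : 1 ≤ n) (p q : ℝ)
    (hp : p ∈ Set.Ioo (-(1 / (n : ℝ))) 0 ∪ Set.Ioi (0 : ℝ))
    (hq : 1 / q = 1 / p + (n : ℝ))
    (w : (Fin n → ℝ) → ℝ) (hwm : Measurable w) (hw0 : ∀ x, 0 ≤ w x)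
    (hwconc : ∀ x y : Fin n → ℝ, 0 < w x * w y → ∀ lam ∈ Set.Ioo (0 : ℝ) 1,
      (lam * w x ^ p + (1 - lam) * w y ^ p) ^ (1 / p) ≤ w (lam • x + (1 - lam) • y))
    (μ : Measure (Fin n → ℝ))
    (hμ : μ = volume.withDensity fun x => ENNReal.ofReal (w x)) :
    ∀ A B : Set (Fin n → ℝ), MeasurableSet A → MeasurableSet B → 0 < μ A * μ B →
      ∀ lam ∈ Set.Ioo (0 : ℝ) 1,
        (ENNReal.ofReal lam * μ A ^ q + ENNReal.ofReal (1 - lam) * μ B ^ q) ^ (1 / q) ≤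
          innerMeasure μ (lam • A + (1 - lam) • B) := by
  intro A B hA hB hAB l hl
  have hn' : (0 : ℝ) < n := by exact_mod_cast hn
  have hp0 : p ≠ 0 := by
    rcases hp with hp | hp
    · exact hp.2.ne
    · exact (mem_Ioi.1 hp).ne'
  have hp1 : 0 < 1 + n * p := by
    rcases hp with hp | hp
    · have h := mul_lt_mul_of_pos_left hp.1 hn'
      rw [mul_neg, mul_one_div_cancel hn'.ne'] at h
      linarith
    · have := mem_Ioi.1 hp
      positivity
  have hqp : q = p / (1 + n * p) := by
    have h : 1 / q = (1 + n * p) / p := by rw [hq]; field_simp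
    rw [← one_div_one_div q, h, one_div_div]
  subst hqp
  have hA0 : 0 < μ A := pos_of_ne_zero fun h => by simp [h] at hAB
  have hB0 : 0 < μ B := pos_of_ne_zero fun h => by simp [h] at hAB
  have : SigmaFinite μ := hμ ▸ SigmaFinite.withDensity_ofReal w
  obtain ⟨u, -, hu, hulim⟩ := exists_seq_strictMono_tendsto' hA0
  obtain ⟨v, -, hv, hvlim⟩ := exists_seq_strictMono_tendsto' hB0
  refine le_of_tendsto' (tendsto_powerMean hulim hvlim) fun k => ?_
  obtain ⟨K, hKA, hK, huK⟩ := hA.exists_lt_isCompact (hu k).2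
  obtain ⟨L, hLB, hL, hvL⟩ := hB.exists_lt_isCompact (hv k).2
  refine (powerMean_mono (div_ne_zero hp0 hp1.ne') huK.le hvL.le).trans ?_
  have hKL : powerMean (p / (1 + n * p)) l (μ K) (μ L) ≤ μ (l • K + (1 - l) • L) := by
    subst hμ
    exact powerMean_measure_le_of_isCompact n hp0 hp1 hl hwm
      (fun x y hxy => hwconc x y hxy l hl) hK hL (pos_of_gt huK).ne' (pos_of_gt hvL).ne'
  refine hKL.trans ?_
  exact le_iSup_of_le (l • K + (1 - l) • L) <|
    le_iSup_of_le ((hK.smul l).add (hL.smul (1 - l))).measurableSet <|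
    le_iSup_of_le (add_subset_add (smul_set_mono hKA) (smul_set_mono hLB)) le_rfl
end

section
/- Let n ≥ 1, p ∈ (−1/n, 0), and let q satisfy 1/q = 1/p + n (so q < 0). Let w : ℝⁿ∖{0} → [0,∞) be a p-homogeneous Borel density, and let μ be the measure with density w with respect to Lebesgue measure. Let ‖·‖_K be a semi-norm on ℝⁿ with open unit ball K such that μ(ℝⁿ∖K) < ∞. Then for every Borel set C ⊆ ℝⁿ with μ(C) < ∞, μ⁻_K(C) ≥ −(1/q)·μ(ℝⁿ∖K)^q·μ(C)^{1−q}, and for every t > 0 equality holds for C = ℝⁿ∖(tK); i.e., complements of homothetic copies of K are isoperimetric minimizers. -/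
open MeasureTheory Set Filter
open scoped Pointwise ENNReal Topology

/-- The (outer) Minkowski boundary measure of `A` with respect to the "unit ball" `K`:
`μ⁺_K(A) := liminf_{ε → 0⁺} μ((A + εK) \ A) / ε`. -/
noncomputable def mBoundary {n : ℕ} (μ : Measure (Fin n → ℝ)) (K A : Set (Fin n → ℝ)) :
    ℝ≥0∞ :=
  Filter.liminf (fun ε : ℝ => μ ((A + ε • K) \ A) / ENNReal.ofReal ε) (𝓝[>] (0 : ℝ))

/-- The inner Minkowski boundary measure `μ⁻_K(C) := μ⁺_K(ℝⁿ \ C)`. -/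
noncomputable def mInnerBoundary {n : ℕ} (μ : Measure (Fin n → ℝ)) (K C : Set (Fin n → ℝ)) :
    ℝ≥0∞ :=
  mBoundary μ K Cᶜ

/-- Bernoulli's inequality for negative exponents. -/
lemma one_sub_mul_le_one_add_rpow_neg {s b : ℝ} (hs : -1 < s) (hb : 0 ≤ b) :
    1 - b * s ≤ (1 + s) ^ (-b) := by
  rw [Real.rpow_def_of_pos (by linarith)]
  have h₁ := Real.add_one_le_exp (Real.log (1 + s) * -b)
  have h₂ := Real.log_le_sub_one_of_pos (show 0 < 1 + s by linarith)
  nlinarith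

section Homogeneous

variable {E : Type*} [NormedAddCommGroup E] [NormedSpace ℝ E] [FiniteDimensional ℝ E]
  [MeasurableSpace E] [BorelSpace E] [Nontrivial E] (ν : Measure E) [ν.IsAddHaarMeasure]

/-- Integration in polar coordinates. -/
lemma lintegral_eq_lintegral_sphere_lintegral_Ioi {f : E → ℝ≥0∞} (hf : Measurable f) :
    ∫⁻ x, f x ∂ν = ∫⁻ θ, (∫⁻ r in Ioi (0 : ℝ),
      ENNReal.ofReal (r ^ (Module.finrank ℝ E - 1)) * f (r • (θ : E))) ∂ν.toSphere := by
  have hmp := (ν.measurePreserving_homeomorphUnitSphereProd).symm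
    (homeomorphUnitSphereProd E).toMeasurableEquiv
  have hg : Measurable fun x : ({(0)}ᶜ : Set E) => f x.1 := hf.comp measurable_subtype_coe
  calc
    ∫⁻ x, f x ∂ν = ∫⁻ x : ({(0)}ᶜ : Set E), f x.1 ∂(ν.comap (↑)) := by
      rw [lintegral_subtype_comap (measurableSet_singleton _).compl f,
        restrict_compl_singleton]
    _ = ∫⁻ x, f ((homeomorphUnitSphereProd E).symm x).1
          ∂ν.toSphere.prod (.volumeIoiPow (Module.finrank ℝ E - 1)) :=
      (hmp.lintegral_comp hg).symm
    _ = ∫⁻ θ, (∫⁻ r, f ((homeomorphUnitSphereProd E).symm (θ, r)).1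
          ∂(Measure.volumeIoiPow (Module.finrank ℝ E - 1))) ∂ν.toSphere :=
      lintegral_prod _ (hg.comp hmp.measurable).aemeasurable
    _ = _ := by
      refine lintegral_congr fun θ => ?_
      rw [Measure.volumeIoiPow, lintegral_withDensity_eq_lintegral_mul _ (by fun_prop)
        (by exact (hg.comp hmp.measurable).comp measurable_prodMk_left)]
      exact lintegral_subtype_comap measurableSet_Ioi (fun r : ℝ =>
        ENNReal.ofReal (r ^ (Module.finrank ℝ E - 1)) * f (r • (θ : E)))

variable {w : E → ℝ} {a : ℝ}

lemma withDensity_smul_set (hwm : Measurable w)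
    (hw : ∀ c : ℝ, 0 < c → ∀ x : E, x ≠ 0 →
      w (c • x) = c ^ (-a - (Module.finrank ℝ E : ℝ)) * w x)
    {c : ℝ} (hc : 0 < c) {S : Set E} (hS : MeasurableSet S) :
    ν.withDensity (fun x => ENNReal.ofReal (w x)) (c • S) =
      ENNReal.ofReal (c ^ (-a)) * ν.withDensity (fun x => ENNReal.ofReal (w x)) S := by
  have hcS : MeasurableSet (c • S) := hS.const_smul₀ c
  set d := Module.finrank ℝ E
  rw [withDensity_apply _ hcS, withDensity_apply _ hS, ← lintegral_indicator hcS,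
    ← lintegral_indicator hS]
  set f : E → ℝ≥0∞ := (c • S).indicator fun x => ENNReal.ofReal (w x) with hf
  have hfm : Measurable f := (hwm.ennreal_ofReal).indicator hcS
  have h₁ : ∫⁻ x, f (c • x) ∂ν = ENNReal.ofReal ((c ^ d)⁻¹) * ∫⁻ x, f x ∂ν := by
    rw [← lintegral_map hfm (measurable_const_smul c), Measure.map_addHaar_smul ν hc.ne',
      lintegral_smul_measure, abs_of_pos (by positivity), smul_eq_mul]
  have h₂ : ∫⁻ x, f (c • x) ∂ν = ENNReal.ofReal (c ^ (-a - (d : ℝ))) *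
      ∫⁻ x, S.indicator (fun x => ENNReal.ofReal (w x)) x ∂ν := by
    rw [← lintegral_const_mul _ ((hwm.ennreal_ofReal).indicator hS)]
    refine lintegral_congr_ae ?_
    filter_upwards [compl_mem_ae_iff.2 (measure_singleton (μ := ν) (0 : E))] with x hx
    by_cases hxS : x ∈ S
    · rw [hf, indicator_of_mem (smul_mem_smul_set hxS), indicator_of_mem hxS, hw c hc x hx,
        ENNReal.ofReal_mul (by positivity)]
    · rw [hf, indicator_of_notMem (by rwa [smul_mem_smul_set_iff₀ hc.ne']),
        indicator_of_notMem hxS, mul_zero]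
  have h₃ : ENNReal.ofReal (c ^ d) * ENNReal.ofReal ((c ^ d)⁻¹) = 1 := by
    rw [← ENNReal.ofReal_mul (by positivity), mul_inv_cancel₀ (by positivity), ENNReal.ofReal_one]
  rw [← one_mul (∫⁻ x, f x ∂ν), ← h₃, mul_assoc, ← h₁, h₂, ← mul_assoc,
    ← ENNReal.ofReal_mul (by positivity), ← Real.rpow_natCast, ← Real.rpow_add hc]
  congr 3
  ring

/-- Moving a set `D` radially inwards by `δ` (as measured by `N`) multiplies the density of a
homogeneous measure by `(1 - δ / N) ^ (-a - 1)`. -/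
lemma lintegral_rpow_le_withDensity_of_radial_shift (hwm : Measurable w)
    (hw : ∀ c : ℝ, 0 < c → ∀ x : E, x ≠ 0 →
      w (c • x) = c ^ (-a - (Module.finrank ℝ E : ℝ)) * w x)
    {N : E → ℝ} (hNm : Measurable N) (hNhom : ∀ c : ℝ, 0 ≤ c → ∀ x, N (c • x) = c * N x)
    {C D : Set E} (hC : MeasurableSet C) (hD : MeasurableSet D) {δ : ℝ} (hδ : 0 < δ)
    (hDN : ∀ x ∈ D, δ < N x) (hDC : ∀ x ∈ D, (1 - δ / N x) • x ∈ C) :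
    ∫⁻ x in D, ENNReal.ofReal ((1 - δ / N x) ^ (-a - 1))
        ∂ν.withDensity (fun x => ENNReal.ofReal (w x)) ≤
      ν.withDensity (fun x => ENNReal.ofReal (w x)) C := by
  have hφ : Measurable fun x => ENNReal.ofReal ((1 - δ / N x) ^ (-a - 1)) := by fun_prop
  have hwm' : Measurable fun x => ENNReal.ofReal (w x) := hwm.ennreal_ofReal
  rw [withDensity_apply _ hC, restrict_withDensity hD,
    lintegral_withDensity_eq_lintegral_mul _ hwm' hφ, ← lintegral_indicator hC,
    ← lintegral_indicator hD,
    lintegral_eq_lintegral_sphere_lintegral_Ioi ν (hwm'.indicator hC),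
    lintegral_eq_lintegral_sphere_lintegral_Ioi ν ((hwm'.mul hφ).indicator hD)]
  refine lintegral_mono fun θ => ?_
  have hθ : (θ : E) ≠ 0 := ne_zero_of_mem_unit_sphere θ
  have hpow : ∀ r : ℝ, 0 < r → ENNReal.ofReal (r ^ (Module.finrank ℝ E - 1)) *
      ENNReal.ofReal (w (r • (θ : E))) = ENNReal.ofReal (r ^ (-a - 1) * w θ) := by
    intro r hr
    have hd : (1 : ℕ) ≤ Module.finrank ℝ E := Module.finrank_pos
    rw [hw r hr _ hθ, ← ENNReal.ofReal_mul (by positivity), ← mul_assoc, ← Real.rpow_natCast,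
      ← Real.rpow_add hr, Nat.cast_sub hd]
    congr 3
    push_cast
    ring
  set s := δ / N θ
  rw [← lintegral_indicator measurableSet_Ioi, ← lintegral_indicator measurableSet_Ioi]
  refine le_of_le_of_eq ?_ (lintegral_sub_right_eq_self _ s)
  refine lintegral_mono fun r => ?_
  by_cases hr : r ∈ Ioi (0 : ℝ)
  swap
  · simp [indicator_of_notMem hr]
  by_cases hrD : r • (θ : E) ∈ D
  swap
  · rw [indicator_of_mem hr, indicator_of_notMem hrD, mul_zero]
    exact zero_le
  rw [mem_Ioi] at hr
  have h₁ := hDN _ hrD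
  have h₂ := hDC _ hrD
  rw [hNhom r hr.le] at h₁ h₂
  have hNθ : 0 < N θ := by
    by_contra h
    nlinarith
  have hsr : s < r := by rwa [div_lt_iff₀ hNθ]
  have h₃ : 1 - δ / (r * N θ) = (r - s) / r := by
    simp only [s]; field_simp
  have h₄ : (1 - δ / (r * N θ)) • r • (θ : E) = (r - s) • (θ : E) := by
    rw [smul_smul, h₃, div_mul_cancel₀ _ hr.ne']
  rw [h₄] at h₂
  have hrs : 0 < r - s := sub_pos.2 hsr
  rw [indicator_of_mem (mem_Ioi.2 hr), indicator_of_mem hrD, indicator_of_mem (mem_Ioi.2 hrs),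
    indicator_of_mem h₂, hpow _ hrs, Pi.mul_apply, ← mul_assoc, hpow _ hr, hNhom r hr.le, h₃,
    ← ENNReal.ofReal_mul' (by positivity), Real.div_rpow hrs.le hr.le]
  apply le_of_eq
  congr 1
  have : r ^ (-a - 1) ≠ 0 := by positivity
  field_simp


lemma withDensity_eq_zero_of_forall_smul_subset (ha : 0 < a) (hwm : Measurable w)
    (hw : ∀ c : ℝ, 0 < c → ∀ x : E, x ≠ 0 →
      w (c • x) = c ^ (-a - (Module.finrank ℝ E : ℝ)) * w x)
    {S C : Set E} (hS : MeasurableSet S)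
    (hC : ν.withDensity (fun x => ENNReal.ofReal (w x)) C ≠ ⊤)
    (hSC : ∀ c : ℝ, 0 < c → c ≤ 1 → c • S ⊆ C) :
    ν.withDensity (fun x => ENNReal.ofReal (w x)) S = 0 := by
  by_contra h
  obtain ⟨k, hk⟩ := ENNReal.exists_nat_mul_gt h hC
  have hk1 : (0 : ℝ) < (k : ℝ) + 1 := by positivity
  have hsub := measure_mono (μ := ν.withDensity (fun x => ENNReal.ofReal (w x)))
    (hSC (((k : ℝ) + 1) ^ (-(1 / a))) (by positivity)
      (Real.rpow_le_one_of_one_le_of_nonpos (by simp) (by simp [ha.le])))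
  rw [withDensity_smul_set ν hwm hw (by positivity) hS, ← Real.rpow_mul hk1.le,
    show -(1 / a) * -a = 1 by field_simp, Real.rpow_one] at hsub
  refine absurd (hk.trans_le (le_trans ?_ hsub)) (lt_irrefl _)
  gcongr
  rw [← ENNReal.ofReal_natCast]
  exact ENNReal.ofReal_le_ofReal (by simp)

end Homogeneous

/-- If the superlevel sets of `N` have measure `r ^ (-a) * M`, this computes (from above) the
integral of `(1 / ρ - 1 / N)⁺`. -/
lemma lintegral_inv_sub_inv_le {α : Type*} [MeasurableSpace α] (μ : Measure α) {N : α → ℝ}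
    (hNm : Measurable N) {a ρ : ℝ} (ha : 0 < a) (hρ : 0 < ρ) {M : ℝ≥0∞}
    (hM : ∀ r : ℝ, 0 < r → μ {x | r ≤ N x} = ENNReal.ofReal (r ^ (-a)) * M) :
    ∫⁻ x, ENNReal.ofReal ({x | ρ ≤ N x}.indicator (fun x => 1 / ρ - 1 / N x) x) ∂μ ≤
      ENNReal.ofReal (ρ ^ (-a - 1) / (a + 1)) * M := by
  have hset : MeasurableSet {x | ρ ≤ N x} := measurableSet_le measurable_const hNm
  have hnn : ∀ x, 0 ≤ {x | ρ ≤ N x}.indicator (fun x => 1 / ρ - 1 / N x) x := by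
    refine fun x => indicator_nonneg (fun y hy => ?_) x
    exact sub_nonneg.2 (one_div_le_one_div_of_le hρ hy)
  rw [lintegral_eq_lintegral_meas_le μ (Eventually.of_forall hnn)
    (((by fun_prop : Measurable fun x => 1 / ρ - 1 / N x).indicator hset).aemeasurable)]
  have hu : 0 < 1 / ρ := by positivity
  have hle : ∀ t ∈ Ioi (0 : ℝ),
      μ {x | t ≤ {x | ρ ≤ N x}.indicator (fun x => 1 / ρ - 1 / N x) x} ≤
        (Ioo 0 (1 / ρ)).indicator (fun t => ENNReal.ofReal ((1 / ρ - t) ^ a) * M) t := by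
    intro t ht
    rw [mem_Ioi] at ht
    have hmem : ∀ x, t ≤ {x | ρ ≤ N x}.indicator (fun x => 1 / ρ - 1 / N x) x →
        ρ ≤ N x ∧ t ≤ 1 / ρ - 1 / N x := by
      intro x hx
      by_cases hxρ : x ∈ {x | ρ ≤ N x}
      · exact ⟨hxρ, by rwa [indicator_of_mem hxρ] at hx⟩
      · rw [indicator_of_notMem hxρ] at hx
        linarith
    by_cases htρ : t < 1 / ρ
    · rw [indicator_of_mem (show t ∈ Ioo 0 (1 / ρ) from ⟨ht, htρ⟩)]
      have hpos : 0 < 1 / ρ - t := sub_pos.2 htρ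
      have h := hM (1 / ρ - t)⁻¹ (by positivity)
      rw [Real.inv_rpow hpos.le, Real.rpow_neg hpos.le, inv_inv] at h
      rw [← h]
      refine measure_mono fun x hx => ?_
      obtain ⟨h₁, h₂⟩ := hmem x hx
      have hN : 0 < N x := hρ.trans_le h₁
      refine inv_le_of_inv_le₀ hN ?_
      rw [inv_eq_one_div]
      linarith
    · refine le_of_eq_of_le (measure_mono_null (t := ∅) (fun x hx => ?_) measure_empty) zero_le
      obtain ⟨h₁, h₂⟩ := hmem x hx
      have : 0 < 1 / N x := by have := hρ.trans_le h₁; positivity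
      exact absurd htρ (by push Not; linarith)
  refine (setLIntegral_mono' measurableSet_Ioi hle).trans ?_
  rw [lintegral_indicator measurableSet_Ioo, Measure.restrict_restrict measurableSet_Ioo,
    inter_eq_self_of_subset_left Ioo_subset_Ioi_self, lintegral_mul_const _ (by fun_prop)]
  gcongr
  rw [Measure.restrict_congr_set Ioo_ae_eq_Ioc, ← ofReal_integral_eq_lintegral_ofReal,
    ← intervalIntegral.integral_of_le hu.le]
  · rw [intervalIntegral.integral_comp_sub_left (fun t => t ^ a), sub_self, sub_zero,
      integral_rpow (Or.inl (by linarith)), Real.zero_rpow (by linarith), sub_zero,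
      one_div, Real.inv_rpow hρ.le, ← Real.rpow_neg hρ.le, neg_add, ← sub_eq_add_neg]
  · refine (ContinuousOn.integrableOn_Icc ?_).mono_set Ioc_subset_Icc_self
    exact (Continuous.rpow_const (by fun_prop) fun _ => Or.inr ha.le).continuousOn
  · filter_upwards [ae_restrict_mem measurableSet_Ioc] with t ht
    exact Real.rpow_nonneg (sub_nonneg.2 ht.2) _

section Homogeneous

variable {E : Type*} [NormedAddCommGroup E] [NormedSpace ℝ E] [FiniteDimensional ℝ E]
  [MeasurableSpace E] [BorelSpace E] [Nontrivial E] (ν : Measure E) [ν.IsAddHaarMeasure]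
  {w : E → ℝ} {a : ℝ} {N : E → ℝ}

lemma withDensity_setOf_le (hwm : Measurable w)
    (hw : ∀ c : ℝ, 0 < c → ∀ x : E, x ≠ 0 →
      w (c • x) = c ^ (-a - (Module.finrank ℝ E : ℝ)) * w x)
    (hNm : Measurable N) (hNhom : ∀ c : ℝ, 0 ≤ c → ∀ x, N (c • x) = c * N x)
    {r : ℝ} (hr : 0 < r) :
    ν.withDensity (fun x => ENNReal.ofReal (w x)) {x | r ≤ N x} =
      ENNReal.ofReal (r ^ (-a)) *
        ν.withDensity (fun x => ENNReal.ofReal (w x)) {x | 1 ≤ N x} := by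
  rw [← withDensity_smul_set ν hwm hw hr (measurableSet_le measurable_const hNm)]
  congr 1
  ext x
  rw [mem_smul_set_iff_inv_smul_mem₀ hr.ne', mem_ofPred_eq, mem_ofPred_eq,
    hNhom _ (inv_nonneg.2 hr.le), inv_mul_eq_div, le_div_iff₀ hr, one_mul]

/-- If `D` lies in `C` together with all its translates by `-k`, `N k < ε`, then the part of `D`
where `N < ε` is negligible, as otherwise `C` would contain all its contractions. -/
lemma withDensity_inter_lt_eq_zero (ha : 0 < a) (hwm : Measurable w)
    (hw : ∀ c : ℝ, 0 < c → ∀ x : E, x ≠ 0 →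
      w (c • x) = c ^ (-a - (Module.finrank ℝ E : ℝ)) * w x)
    (hN0 : ∀ x, 0 ≤ N x)
    (hNm : Measurable N) (hNhom : ∀ c : ℝ, 0 ≤ c → ∀ x, N (c • x) = c * N x)
    {C D : Set E} (hD : MeasurableSet D)
    (hC : ν.withDensity (fun x => ENNReal.ofReal (w x)) C ≠ ⊤) {ε : ℝ}
    (hDC : ∀ x ∈ D, ∀ k, N k < ε → x - k ∈ C) :
    ν.withDensity (fun x => ENNReal.ofReal (w x)) (D ∩ {x | N x < ε}) = 0 := by
  refine withDensity_eq_zero_of_forall_smul_subset ν ha hwm hw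
    (hD.inter (measurableSet_lt hNm measurable_const)) hC fun c hc hc1 => ?_
  rintro _ ⟨x, ⟨hxD, hxN⟩, rfl⟩
  have := hDC x hxD ((1 - c) • x) (by
    rw [hNhom _ (by linarith)]
    have := hN0 x
    rw [mem_ofPred_eq] at hxN
    nlinarith)
  rwa [sub_smul, one_smul, sub_sub_cancel] at this

lemma withDensity_toReal_mul_le (ha : 0 < a) (hwm : Measurable w)
    (hw : ∀ c : ℝ, 0 < c → ∀ x : E, x ≠ 0 →
      w (c • x) = c ^ (-a - (Module.finrank ℝ E : ℝ)) * w x)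
    (hN0 : ∀ x, 0 ≤ N x)
    (hNm : Measurable N) (hNhom : ∀ c : ℝ, 0 ≤ c → ∀ x, N (c • x) = c * N x)
    {μ : Measure E} (hμ : μ = ν.withDensity (fun x => ENNReal.ofReal (w x)))
    (hM : μ {x | 1 ≤ N x} ≠ ⊤)
    {C D : Set E} (hCm : MeasurableSet C) (hD : MeasurableSet D) (hC : μ C ≠ ⊤) {ε ρ : ℝ}
    (hε : 0 < ε) (hρ : 0 < ρ) (hDC : ∀ x ∈ D, ∀ k, N k < ε → x - k ∈ C) :
    (1 + (a + 1) * ε / ρ) * (μ D).toReal ≤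
      (μ C).toReal + ε * ρ ^ (-a - 1) * (μ {x | 1 ≤ N x}).toReal := by
  subst hμ
  have hnull := withDensity_inter_lt_eq_zero ν ha hwm hw hN0 hNm hNhom hD hC hDC
  set μ := ν.withDensity (fun x => ENNReal.ofReal (w x)) with hμ
  set M := μ {x | 1 ≤ N x} with hMdef
  set D' := D \ {x | N x < ε} with hD'
  have hDD' : μ D' = μ D := measure_sdiff_null' hnull
  have hD'm : MeasurableSet D' := hD.diff (measurableSet_lt hNm measurable_const)
  have hlayer := lintegral_inv_sub_inv_le μ hNm ha hρ
    (fun r hr => withDensity_setOf_le ν hwm hw hNm hNhom hr)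
  set f := {x | ρ ≤ N x}.indicator (fun x => 1 / ρ - 1 / N x) with hf
  have hfm : Measurable f := (by fun_prop : Measurable fun x => 1 / ρ - 1 / N x).indicator
    (measurableSet_le measurable_const hNm)
  have hD'N : ∀ x ∈ D', ε ≤ N x := fun x hx => not_lt.1 hx.2
  have key : ∀ δ ∈ Ioo 0 ε, (1 + (a + 1) * δ / ρ) * (μ D).toReal ≤
      (μ C).toReal + δ * ρ ^ (-a - 1) * M.toReal := by
    rintro δ ⟨hδ, hδε⟩
    have hshift : ∫⁻ x in D', ENNReal.ofReal ((1 - δ / N x) ^ (-a - 1)) ∂μ ≤ μ C := by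
      refine lintegral_rpow_le_withDensity_of_radial_shift ν hwm hw hNm hNhom hCm hD'm hδ
        (fun x hx => hδε.trans_le (hD'N x hx)) fun x hx => ?_
      have hNx : 0 < N x := hε.trans_le (hD'N x hx)
      have := hDC x hx.1 ((δ / N x) • x) (by
        rwa [hNhom _ (by positivity), div_mul_cancel₀ _ hNx.ne'])
      rwa [sub_smul, one_smul]
    have hpt : ∀ x ∈ D', ENNReal.ofReal (1 + (a + 1) * δ / ρ) ≤
        ENNReal.ofReal ((1 - δ / N x) ^ (-a - 1)) +
          ENNReal.ofReal ((a + 1) * δ) * ENNReal.ofReal (f x) := by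
      intro x hx
      have hNx : 0 < N x := hε.trans_le (hD'N x hx)
      have hlt : δ / N x < 1 := (div_lt_one hNx).2 (hδε.trans_le (hD'N x hx))
      have hb := one_sub_mul_le_one_add_rpow_neg (s := -(δ / N x)) (b := a + 1)
        (by linarith) (by linarith)
      rw [← sub_eq_add_neg, neg_add, ← sub_eq_add_neg] at hb
      have hfx : 1 / ρ - 1 / N x ≤ f x ∧ 0 ≤ f x := by
        by_cases hxρ : x ∈ {x | ρ ≤ N x}
        · rw [hf, indicator_of_mem hxρ]
          exact ⟨le_rfl, sub_nonneg.2 (one_div_le_one_div_of_le hρ hxρ)⟩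
        · rw [hf, indicator_of_notMem hxρ]
          exact ⟨sub_nonpos.2 (one_div_le_one_div_of_le hNx (not_le.1 hxρ).le), le_rfl⟩
      rw [← ENNReal.ofReal_mul (by positivity),
        ← ENNReal.ofReal_add (Real.rpow_nonneg (by linarith) _)
          (mul_nonneg (by positivity) hfx.2)]
      refine ENNReal.ofReal_le_ofReal ?_
      have h₁ := mul_le_mul_of_nonneg_left hfx.1 (show 0 ≤ (a + 1) * δ by positivity)
      have h₂ : (a + 1) * δ * (1 / ρ - 1 / N x) =
        (a + 1) * δ / ρ + (a + 1) * -(δ / N x) := by ring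
      linarith
    have hint : ENNReal.ofReal (1 + (a + 1) * δ / ρ) * μ D ≤
        μ C + ENNReal.ofReal ((a + 1) * δ) *
          (ENNReal.ofReal (ρ ^ (-a - 1) / (a + 1)) * M) := by
      calc
        _ = ∫⁻ _ in D', ENNReal.ofReal (1 + (a + 1) * δ / ρ) ∂μ := by
          rw [setLIntegral_const, hDD']
        _ ≤ ∫⁻ x in D', (ENNReal.ofReal ((1 - δ / N x) ^ (-a - 1)) +
              ENNReal.ofReal ((a + 1) * δ) * ENNReal.ofReal (f x)) ∂μ :=
          setLIntegral_mono' hD'm hpt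
        _ = ∫⁻ x in D', ENNReal.ofReal ((1 - δ / N x) ^ (-a - 1)) ∂μ +
              ENNReal.ofReal ((a + 1) * δ) * ∫⁻ x in D', ENNReal.ofReal (f x) ∂μ := by
          rw [lintegral_add_left (by fun_prop), lintegral_const_mul _ hfm.ennreal_ofReal]
        _ ≤ _ := by
          gcongr
          exact (setLIntegral_le_lintegral _ _).trans hlayer
    have := ENNReal.toReal_mono (by finiteness) hint
    rw [ENNReal.toReal_add hC (by finiteness), ENNReal.toReal_mul, ENNReal.toReal_mul,
      ENNReal.toReal_mul, ENNReal.toReal_ofReal (by positivity),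
      ENNReal.toReal_ofReal (by positivity), ENNReal.toReal_ofReal (by positivity)] at this
    convert this using 2
    field_simp
  refine le_of_tendsto_of_tendsto (f := fun δ => (1 + (a + 1) * δ / ρ) * (μ D).toReal)
    (g := fun δ => (μ C).toReal + δ * ρ ^ (-a - 1) * M.toReal) (b := 𝓝[<] ε)
    (Continuous.tendsto (by fun_prop) ε |>.mono_left nhdsWithin_le_nhds)
    (Continuous.tendsto (by fun_prop) ε |>.mono_left nhdsWithin_le_nhds) ?_
  filter_upwards [Ioo_mem_nhdsLT hε] with δ hδ using key δ hδ

end Homogeneous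

lemma smul_setOf_lt_one {E : Type*} [AddCommGroup E] [Module ℝ E] {N : E → ℝ}
    (hNhom : ∀ c : ℝ, 0 ≤ c → ∀ x, N (c • x) = c * N x) {t : ℝ}
    (ht : 0 < t) : t • {x | N x < 1} = {x | N x < t} := by
  ext x
  rw [mem_smul_set_iff_inv_smul_mem₀ ht.ne', mem_ofPred_eq, mem_ofPred_eq,
    hNhom _ (inv_nonneg.2 ht.le), inv_mul_eq_div, div_lt_one ht]

section Boundary

variable {n : ℕ} [NeZero n] {a : ℝ} {w N : (Fin n → ℝ) → ℝ} {μ : Measure (Fin n → ℝ)}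

/-- The isoperimetric inequality, linearized at the complement of the ball of radius `ρ`. -/
lemma ofReal_le_mInnerBoundary (ha : 0 < a) (hwm : Measurable w)
    (hw : ∀ c : ℝ, 0 < c → ∀ x : Fin n → ℝ, x ≠ 0 → w (c • x) = c ^ (-a - (n : ℝ)) * w x)
    (hμ : μ = volume.withDensity fun x => ENNReal.ofReal (w x))
    (hN0 : ∀ x, 0 ≤ N x) (hNc : Continuous N)
    (hNhom : ∀ c : ℝ, 0 ≤ c → ∀ x, N (c • x) = c * N x)
    (hM : μ {x | 1 ≤ N x} ≠ ⊤) {C : Set (Fin n → ℝ)} (hCm : MeasurableSet C) (hC : μ C ≠ ⊤)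
    {ρ : ℝ} (hρ : 0 < ρ) :
    ENNReal.ofReal
        (((a + 1) * (μ C).toReal - ρ ^ (-a) * (μ {x | 1 ≤ N x}).toReal) / ρ) ≤
      mInnerBoundary μ {x | N x < 1} C := by
  set m := (μ C).toReal
  set M := (μ {x | 1 ≤ N x}).toReal
  set B := ((a + 1) * m - ρ ^ (-a) * M) / ρ with hB
  have hlim : Tendsto (fun ε : ℝ => ENNReal.ofReal (B / (1 + (a + 1) * ε / ρ))) (𝓝[>] 0)
      (𝓝 (ENNReal.ofReal B)) := by
    refine ENNReal.tendsto_ofReal (Tendsto.mono_left ?_ nhdsWithin_le_nhds)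
    have : ContinuousAt (fun ε : ℝ => B / (1 + (a + 1) * ε / ρ)) 0 :=
      ContinuousAt.div (by fun_prop) (by fun_prop) (by simp)
    simpa [ContinuousAt] using this
  rw [← hlim.liminf_eq, mInnerBoundary, mBoundary]
  refine liminf_le_liminf ?_
  filter_upwards [self_mem_nhdsWithin] with ε hε
  rw [mem_Ioi] at hε
  rw [smul_setOf_lt_one hNhom hε]
  set D := (Cᶜ + {x | N x < ε})ᶜ with hD
  have hDm : MeasurableSet D :=
    (IsOpen.add_left (isOpen_lt hNc continuous_const)).measurableSet.compl
  have hDC : ∀ x ∈ D, ∀ k, N k < ε → x - k ∈ C := by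
    intro x hx k hk
    by_contra h
    exact hx ⟨x - k, h, k, hk, sub_add_cancel x k⟩
  have hN_zero : N 0 = 0 := by simpa using hNhom 0 le_rfl 0
  have hsub : D ⊆ C := fun x hx => by simpa using hDC x hx 0 (by rwa [hN_zero])
  have hset : (Cᶜ + {x | N x < ε}) \ Cᶜ = C \ D := by
    rw [hD, sdiff_compl, sdiff_compl, inter_comm]
  have hDfin : μ D ≠ ⊤ := measure_ne_top_of_subset hsub hC
  have hmeas : μ (C \ D) = ENNReal.ofReal (m - (μ D).toReal) := by
    rw [measure_sdiff hsub hDm.nullMeasurableSet hDfin, ENNReal.ofReal_sub _ ENNReal.toReal_nonneg,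
      ENNReal.ofReal_toReal hC, ENNReal.ofReal_toReal hDfin]
  have key := withDensity_toReal_mul_le volume ha hwm (by simpa using hw) hN0 hNc.measurable hNhom
    hμ hM hCm hDm hC hε hρ hDC
  rw [hset, hmeas, ← ENNReal.ofReal_div_of_pos hε]
  refine ENNReal.ofReal_le_ofReal ?_
  rw [div_le_div_iff₀ (by positivity) hε]
  have hpow : ρ ^ (-a - 1) = ρ ^ (-a) / ρ := Real.rpow_sub_one hρ.ne' _
  rw [hpow] at key
  have h₁ : B * ε = (a + 1) * ε / ρ * m - ε * (ρ ^ (-a) / ρ) * M := by rw [hB]; ring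
  have h₂ : (m - (μ D).toReal) * (1 + (a + 1) * ε / ρ) =
    m + (a + 1) * ε / ρ * m - (1 + (a + 1) * ε / ρ) * (μ D).toReal := by ring
  linarith

lemma mInnerBoundary_compl_smul_le (ha : 0 < a) (hwm : Measurable w)
    (hw : ∀ c : ℝ, 0 < c → ∀ x : Fin n → ℝ, x ≠ 0 → w (c • x) = c ^ (-a - (n : ℝ)) * w x)
    (hμ : μ = volume.withDensity fun x => ENNReal.ofReal (w x))
    (hNc : Continuous N) (hNadd : ∀ x y, N (x + y) ≤ N x + N y)
    (hNhom : ∀ c : ℝ, 0 ≤ c → ∀ x, N (c • x) = c * N x)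
    (hM : μ {x | 1 ≤ N x} ≠ ⊤) {t : ℝ} (ht : 0 < t) :
    mInnerBoundary μ {x | N x < 1} (t • {x | N x < 1})ᶜ ≤
      ENNReal.ofReal (a * t ^ (-a - 1) * (μ {x | 1 ≤ N x}).toReal) := by
  rw [mInnerBoundary, mBoundary, compl_compl, smul_setOf_lt_one hNhom ht]
  set M := (μ {x | 1 ≤ N x}).toReal with hMdef
  refine (liminf_le_liminf ?_).trans_eq (liminf_const _)
  filter_upwards [self_mem_nhdsWithin] with ε hε
  rw [mem_Ioi] at hε
  rw [smul_setOf_lt_one hNhom hε]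
  have hlevel : ∀ r : ℝ, 0 < r → μ {x | r ≤ N x} = ENNReal.ofReal (r ^ (-a) * M) := by
    intro r hr
    rw [ENNReal.ofReal_mul (by positivity), hMdef, ENNReal.ofReal_toReal hM, hμ]
    exact withDensity_setOf_le volume hwm (by simpa using hw) hNc.measurable hNhom hr
  have hsub : ({x | N x < t} + {x | N x < ε}) \ {x | N x < t} ⊆
      {x | t ≤ N x} \ {x | t + ε ≤ N x} := by
    rintro _ ⟨⟨x, hx, y, hy, rfl⟩, hxy⟩
    simp only [mem_ofPred_eq, not_lt, Set.mem_sdiff, not_le] at hx hy hxy ⊢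
    exact ⟨hxy, (hNadd x y).trans_lt (add_lt_add hx hy)⟩
  have hmeas : μ ({x | t ≤ N x} \ {x | t + ε ≤ N x}) =
      ENNReal.ofReal (t ^ (-a) * M - (t + ε) ^ (-a) * M) := by
    have hanti : {x | t + ε ≤ N x} ⊆ {x | t ≤ N x} := fun x hx =>
      (by linarith : t ≤ t + ε).trans hx
    rw [measure_sdiff hanti
      (measurableSet_le measurable_const hNc.measurable).nullMeasurableSet
      (by rw [hlevel _ (by linarith)]; exact ENNReal.ofReal_ne_top), hlevel _ ht,
      hlevel _ (by linarith), ENNReal.ofReal_sub _ (by positivity)]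
  refine (ENNReal.div_le_div_right (measure_mono hsub) _).trans ?_
  rw [hmeas, ← ENNReal.ofReal_div_of_pos hε]
  refine ENNReal.ofReal_le_ofReal ?_
  rw [div_le_iff₀ hε, ← sub_mul]
  have hMnn : 0 ≤ M := ENNReal.toReal_nonneg
  have hpos : 0 < ε / t := by positivity
  have hb := one_sub_mul_le_one_add_rpow_neg (s := ε / t) (b := a) (by linarith) ha.le
  have h₁ : (t + ε) ^ (-a) = t ^ (-a) * (1 + ε / t) ^ (-a) := by
    rw [← Real.mul_rpow ht.le (by positivity)]
    congr 1
    field_simp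
  have h₂ : t ^ (-a) - (t + ε) ^ (-a) ≤ a * t ^ (-a - 1) * ε := by
    have := mul_le_mul_of_nonneg_left hb (Real.rpow_nonneg ht.le (-a))
    rw [h₁, Real.rpow_sub_one ht.ne']
    have h₃ : a * (t ^ (-a) / t) * ε = t ^ (-a) - t ^ (-a) * (1 - a * (ε / t)) := by ring
    linarith
  nlinarith [mul_le_mul_of_nonneg_right h₂ hMnn]

end Boundary

/-- for a `p`-homogeneous density `w` on `ℝⁿ \ {0}` with `p ∈ (-1/n, 0)`,
`1/q = 1/p + n (< 0)`, and a semi-norm with open unit ball `K` with `μ(ℝⁿ∖K) < ∞`,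
`μ⁻_K(C) ≥ -(1/q) μ(ℝⁿ∖K)^q μ(C)^{1-q}` holds, with equality for the complements of
homothetic copies of `K`. -/
theorem stmt2 (n : ℕ) (hn : 1 ≤ n) (p q : ℝ)
    (hp : p ∈ Set.Ioo (-(1 / (n : ℝ))) 0) (hq : 1 / q = 1 / p + (n : ℝ))
    (w : (Fin n → ℝ) → ℝ) (hwm : Measurable w) (hw0 : ∀ x, 0 ≤ w x)
    (hwhom : ∀ c : ℝ, 0 < c → ∀ x : Fin n → ℝ, x ≠ 0 → w (c • x) ^ p = c * w x ^ p)
    (μ : Measure (Fin n → ℝ))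
    (hμ : μ = volume.withDensity fun x => ENNReal.ofReal (w x))
    (N : (Fin n → ℝ) → ℝ) (hN0 : ∀ x, 0 ≤ N x)
    (hNadd : ∀ x y, N (x + y) ≤ N x + N y)
    (hNhom : ∀ c : ℝ, 0 ≤ c → ∀ x, N (c • x) = c * N x)
    (K : Set (Fin n → ℝ)) (hK : K = {x | N x < 1})
    (hKfin : μ Kᶜ < ⊤) :
    (∀ C : Set (Fin n → ℝ), MeasurableSet C → μ C < ⊤ →
      ENNReal.ofReal (-(1 / q)) * μ Kᶜ ^ q * μ C ^ (1 - q) ≤ mInnerBoundary μ K C) ∧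
    (∀ t : ℝ, 0 < t →
      mInnerBoundary μ K ((t • K)ᶜ) =
        ENNReal.ofReal (-(1 / q)) * μ Kᶜ ^ q * μ ((t • K)ᶜ) ^ (1 - q)) := by
  have hn0 : (0 : ℝ) < n := by exact_mod_cast hn
  have : NeZero n := ⟨by omega⟩
  obtain ⟨hp₁, hp₂⟩ := hp
  have hqneg : 1 / q < 0 := by
    have : (n : ℝ) < -(1 / p) := by
      rw [← one_div_neg_eq_neg_one_div, lt_div_iff₀ (by linarith)]
      rw [neg_lt, lt_div_iff₀ hn0] at hp₁
      linarith
    linarith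
  have hq0 : q < 0 := one_div_neg.1 hqneg
  obtain ⟨a, ha_def⟩ : ∃ a : ℝ, a = -(1 / q) := ⟨_, rfl⟩
  have ha : 0 < a := by linarith
  have haq : a * q = -1 := by rw [ha_def]; field_simp [hq0.ne]
  have hw : ∀ c : ℝ, 0 < c → ∀ x : Fin n → ℝ, x ≠ 0 →
      w (c • x) = c ^ (-a - (n : ℝ)) * w x := by
    intro c hc x hx
    rw [← Real.rpow_rpow_inv (hw0 (c • x)) hp₂.ne, hwhom c hc x hx,
      Real.mul_rpow hc.le (Real.rpow_nonneg (hw0 x) p), Real.rpow_rpow_inv (hw0 x) hp₂.ne]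
    congr 2
    rw [ha_def, inv_eq_one_div]
    linarith
  have hNc : Continuous N := by
    refine ConvexOn.locallyLipschitz ⟨convex_univ, ?_⟩ |>.continuous
    intro x _ y _ s t hs ht _
    simpa [hNhom s hs, hNhom t ht] using hNadd (s • x) (t • y)
  have hKc : Kᶜ = {x | 1 ≤ N x} := by ext x; simp [hK]
  rw [hKc] at hKfin ⊢
  rw [hK, ← ha_def]
  set M := μ {x | 1 ≤ N x} with hM
  have lower : ∀ C : Set (Fin n → ℝ), MeasurableSet C → μ C < ⊤ →
      ENNReal.ofReal a * M ^ q * μ C ^ (1 - q) ≤ mInnerBoundary μ {x | N x < 1} C := by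
    intro C hCm hC
    have hlin := fun (ρ : ℝ) (hρ : 0 < ρ) =>
      ofReal_le_mInnerBoundary ha hwm hw hμ hN0 hNc hNhom hKfin.ne hCm hC.ne hρ
    rw [← hM] at hlin
    rcases eq_or_ne (μ C) 0 with hC0 | hC0
    · simp [hC0, ENNReal.zero_rpow_of_pos (show 0 < 1 - q by linarith)]
    have hm : 0 < (μ C).toReal := ENNReal.toReal_pos hC0 hC.ne
    rcases eq_or_ne M 0 with hM0 | hM0
    · suffices h : mInnerBoundary μ {x | N x < 1} C = ⊤ by simp [h]
      refine ENNReal.eq_top_of_forall_nnreal_le fun r => ?_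
      have h := hlin ((a + 1) * (μ C).toReal / (r + 1)) (by positivity)
      refine le_trans ?_ h
      rw [hM0, ENNReal.toReal_zero, mul_zero, sub_zero, div_div_cancel₀ (by positivity),
        ← ENNReal.ofReal_coe_nnreal]
      exact ENNReal.ofReal_le_ofReal (by simp)
    · have hMpos : 0 < M.toReal := ENNReal.toReal_pos hM0 hKfin.ne
      have h := hlin ((M.toReal / (μ C).toReal) ^ (-q)) (by positivity)
      refine le_of_eq_of_le ?_ h
      rw [← Real.rpow_mul (by positivity), show -q * -a = -1 by linarith, Real.rpow_neg_one,
        inv_div, div_mul_cancel₀ _ hMpos.ne', Real.rpow_neg (by positivity), div_inv_eq_mul]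
      nth_rewrite 1 [← ENNReal.ofReal_toReal hKfin.ne]
      nth_rewrite 1 [← ENNReal.ofReal_toReal hC.ne]
      rw [ENNReal.ofReal_rpow_of_pos hMpos, ENNReal.ofReal_rpow_of_pos hm,
        ← ENNReal.ofReal_mul ha.le, ← ENNReal.ofReal_mul (by positivity),
        Real.div_rpow hMpos.le hm.le, Real.rpow_sub hm, Real.rpow_one]
      congr 1
      ring
  refine ⟨lower, fun t ht => le_antisymm ?_ (lower _ ?_ ?_)⟩
  · refine (mInnerBoundary_compl_smul_le ha hwm hw hμ hNc hNadd hNhom hKfin.ne ht).trans_eq ?_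
    have hlevel : μ (t • {x | N x < 1})ᶜ = ENNReal.ofReal (t ^ (-a)) * M := by
      rw [hM, hμ, ← withDensity_setOf_le volume hwm (by simpa using hw) hNc.measurable hNhom ht,
        smul_setOf_lt_one hNhom ht]
      congr 1
      ext x
      simp
    rw [hlevel, ← hM]
    rcases eq_or_ne M 0 with hM0 | hM0
    · simp [hM0, ENNReal.zero_rpow_of_pos (show 0 < 1 - q by linarith)]
    have hMpos : 0 < M.toReal := ENNReal.toReal_pos hM0 hKfin.ne
    nth_rewrite 2 3 [← ENNReal.ofReal_toReal hKfin.ne]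
    rw [← ENNReal.ofReal_mul (by positivity), ENNReal.ofReal_rpow_of_pos hMpos,
      ENNReal.ofReal_rpow_of_pos (by positivity), ← ENNReal.ofReal_mul ha.le,
      ← ENNReal.ofReal_mul (by positivity), Real.mul_rpow (by positivity) hMpos.le,
      ← Real.rpow_mul ht.le, show -a * (1 - q) = -a - 1 by linarith, Real.rpow_sub hMpos,
      Real.rpow_one]
    congr 1
    have : M.toReal ^ q ≠ 0 := by positivity
    field_simp
  · rw [smul_setOf_lt_one hNhom ht]
    exact (measurableSet_lt hNc.measurable measurable_const).compl
  · rw [smul_setOf_lt_one hNhom ht]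
    have : {x | N x < t}ᶜ = {x | t ≤ N x} := by ext x; simp
    rw [this, hμ, withDensity_setOf_le volume hwm (by simpa using hw) hNc.measurable hNhom ht,
      ← hμ]
    exact ENNReal.mul_lt_top ENNReal.ofReal_lt_top hKfin
end

section
/- Let n ≥ 1 and q < 0. Let μ be a Borel measure on ℝⁿ which is both q-complemented concave and q-homogeneous, and let ‖·‖_K be a semi-norm on ℝⁿ with open unit ball K such that μ(ℝⁿ∖K) < ∞. Then for every Borel set C ⊆ ℝⁿ with μ(C) < ∞, μ⁻_K(C) ≥ −(1/q)·μ(ℝⁿ∖K)^q·μ(C)^{1−q}, and for every t > 0 equality holds for C = ℝⁿ∖(tK); i.e., complements of homothetic copies of K are isoperimetric minimizers. -/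
open MeasureTheory Set Filter
open scoped Pointwise ENNReal Topology

theorem le_innerMeasure {α : Type*} [MeasurableSpace α] (μ : Measure α) {S : Set α}
    (hS : MeasurableSet S) : μ S ≤ innerMeasure μ S :=
  le_iSup_of_le S <| le_iSup_of_le hS <| le_iSup_of_le subset_rfl le_rfl

theorem compl_smul_set_of_pos {n : ℕ} {c : ℝ} (hc : 0 < c) (S : Set (Fin n → ℝ)) :
    (c • S)ᶜ = c • Sᶜ :=
  (smul_set_compl (a := Units.mk0 c hc.ne') (s := S)).symm

/-- A positively homogeneous subadditive function on `ℝⁿ` is convex. -/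
theorem convexOn_univ_of_subadditive {n : ℕ} {N : (Fin n → ℝ) → ℝ}
    (hNadd : ∀ x y, N (x + y) ≤ N x + N y)
    (hNhom : ∀ c : ℝ, 0 ≤ c → ∀ x, N (c • x) = c * N x) : ConvexOn ℝ univ N := by
  refine ⟨convex_univ, fun x _ y _ a b ha hb _ => ?_⟩
  have h := hNadd (a • x) (b • y)
  rwa [hNhom a ha, hNhom b hb] at h

/-- The one-sided difference quotient of `-(s + ε * b) ^ p` at `ε = 0`. -/
theorem tendsto_rpow_difference_quotient {s : ℝ} (hs : 0 < s) (b p : ℝ) :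
    Tendsto (fun ε : ℝ => (s ^ p - (s + ε * b) ^ p) / ε) (𝓝[>] 0)
      (𝓝 (-p * s ^ (p - 1) * b)) := by
  have hlin : HasDerivAt (fun ε : ℝ => s + ε * b) b 0 := by
    simpa using ((hasDerivAt_id (0 : ℝ)).mul_const b).const_add s
  have h := (hlin.rpow_const (p := p) (Or.inl (by simpa using hs.ne'))).tendsto_slope_zero_right
  convert h.neg using 2 with ε
  · simp only [zero_add, zero_mul, add_zero, smul_eq_mul]
    ring
  · simp only [zero_mul, add_zero]
    ring

/-- Complemented concavity and homogeneity bound the complement of a Minkowski enlargement. -/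
theorem measure_compl_add_smul_le {n : ℕ} {q : ℝ} (hq : q < 0) {μ : Measure (Fin n → ℝ)}
    (hcc : ∀ lam ∈ Set.Ioo (0 : ℝ) 1, ∀ A B : Set (Fin n → ℝ),
      MeasurableSet A → MeasurableSet B → μ Aᶜ < ⊤ → μ Bᶜ < ⊤ →
      innerMeasure μ ((lam • A + (1 - lam) • B)ᶜ) ≤
        (ENNReal.ofReal lam * μ Aᶜ ^ q + ENNReal.ofReal (1 - lam) * μ Bᶜ ^ q) ^ (1 / q))
    (hhom : ∀ A : Set (Fin n → ℝ), MeasurableSet A → ∀ c : ℝ, 0 < c →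
      μ (c • A) = ENNReal.ofReal (c ^ (1 / q)) * μ A)
    {K C : Set (Fin n → ℝ)} (hK : IsOpen K) (hKfin : μ Kᶜ < ⊤)
    (hC : MeasurableSet C) (hCfin : μ C < ⊤) {ε : ℝ} (hε : 0 < ε) (hε1 : ε < 1) :
    μ (Cᶜ + ε • K)ᶜ ≤ (μ C ^ q + ENNReal.ofReal ε * μ Kᶜ ^ q) ^ (1 / q) := by
  have hl : 0 < 1 - ε := sub_pos.2 hε1
  have hμ : μ ((1 - ε)⁻¹ • Cᶜ)ᶜ = ENNReal.ofReal ((1 - ε)⁻¹ ^ (1 / q)) * μ C := by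
    rw [compl_smul_set_of_pos (inv_pos.2 hl), compl_compl, hhom C hC _ (inv_pos.2 hl)]
  have h := hcc (1 - ε) ⟨hl, by linarith⟩ ((1 - ε)⁻¹ • Cᶜ) K
    (hC.compl.const_smul_of_ne_zero (inv_pos.2 hl).ne') hK.measurableSet
    (by rw [hμ]; exact ENNReal.mul_lt_top ENNReal.ofReal_lt_top hCfin) hKfin
  have hpow : ENNReal.ofReal (1 - ε) * (ENNReal.ofReal ((1 - ε)⁻¹ ^ (1 / q)) * μ C) ^ q
      = μ C ^ q := by
    rw [ENNReal.mul_rpow_of_ne_top ENNReal.ofReal_ne_top hCfin.ne,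
      ENNReal.ofReal_rpow_of_pos (Real.rpow_pos_of_pos (inv_pos.2 hl) _),
      ← Real.rpow_mul (inv_pos.2 hl).le, one_div_mul_cancel hq.ne, Real.rpow_one, ← mul_assoc,
      ← ENNReal.ofReal_mul hl.le, mul_inv_cancel₀ hl.ne', ENNReal.ofReal_one, one_mul]
  rw [hμ, hpow, smul_smul, mul_inv_cancel₀ hl.ne', one_smul, sub_sub_cancel] at h
  exact (le_innerMeasure μ (hK.smul₀ hε.ne').add_left.measurableSet.compl).trans h

theorem mInnerBoundary_lower_bound {n : ℕ} {q : ℝ} (hq : q < 0) {μ : Measure (Fin n → ℝ)}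
    (hcc : ∀ lam ∈ Set.Ioo (0 : ℝ) 1, ∀ A B : Set (Fin n → ℝ),
      MeasurableSet A → MeasurableSet B → μ Aᶜ < ⊤ → μ Bᶜ < ⊤ →
      innerMeasure μ ((lam • A + (1 - lam) • B)ᶜ) ≤
        (ENNReal.ofReal lam * μ Aᶜ ^ q + ENNReal.ofReal (1 - lam) * μ Bᶜ ^ q) ^ (1 / q))
    (hhom : ∀ A : Set (Fin n → ℝ), MeasurableSet A → ∀ c : ℝ, 0 < c →
      μ (c • A) = ENNReal.ofReal (c ^ (1 / q)) * μ A)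
    {K C : Set (Fin n → ℝ)} (hK : IsOpen K) (hKfin : μ Kᶜ < ⊤)
    (hC : MeasurableSet C) (hCfin : μ C < ⊤) :
    ENNReal.ofReal (-(1 / q)) * μ Kᶜ ^ q * μ C ^ (1 - q) ≤ mInnerBoundary μ K C := by
  have hp : 1 / q < 0 := one_div_neg.2 hq
  obtain hC0 | hC0 := eq_or_ne (μ C) 0
  · rw [hC0, ENNReal.zero_rpow_of_pos (by linarith), mul_zero]
    exact zero_le
  have hdiff : ∀ᶠ ε : ℝ in 𝓝[>] 0,
      (μ C - (μ C ^ q + ENNReal.ofReal ε * μ Kᶜ ^ q) ^ (1 / q)) / ENNReal.ofReal ε ≤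
        μ ((Cᶜ + ε • K) \ Cᶜ) / ENNReal.ofReal ε := by
    filter_upwards [Ioo_mem_nhdsGT (zero_lt_one' ℝ)] with ε ⟨hε, hε1⟩
    gcongr
    refine (tsub_le_tsub_left
      (measure_compl_add_smul_le hq hcc hhom hK hKfin hC hCfin hε hε1) _).trans ?_
    refine le_measure_sdiff.trans (measure_mono fun x hx => ?_)
    exact ⟨not_not.1 hx.2, not_not.2 hx.1⟩
  refine le_trans ?_ (liminf_le_liminf hdiff)
  obtain hK0 | hK0 := eq_or_ne (μ Kᶜ) 0
  · have hlim : Tendsto (fun ε : ℝ => μ C / ENNReal.ofReal ε) (𝓝[>] 0) (𝓝 ⊤) := by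
      have h0 : Tendsto (fun ε : ℝ => ENNReal.ofReal ε) (𝓝[>] 0) (𝓝 0) := by
        simpa using (ENNReal.continuous_ofReal.tendsto 0).mono_left nhdsWithin_le_nhds
      have h1 := ENNReal.Tendsto.const_div (a := μ C) h0 (Or.inr hCfin.ne)
      rwa [ENNReal.div_zero hC0] at h1
    refine le_top.trans (ge_of_eq ?_)
    refine (hlim.congr' ?_).liminf_eq
    filter_upwards [self_mem_nhdsWithin] with ε hε
    have hε' : ENNReal.ofReal ε ≠ 0 := (ENNReal.ofReal_pos.2 hε).ne'
    rw [hK0, ENNReal.zero_rpow_of_neg hq, ENNReal.mul_top hε', add_top,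
      ENNReal.top_rpow_of_neg hp, tsub_zero]
  obtain ⟨a, ha⟩ : ∃ a : ℝ, a = (μ C).toReal := ⟨_, rfl⟩
  obtain ⟨k, hk⟩ : ∃ k : ℝ, k = (μ Kᶜ).toReal := ⟨_, rfl⟩
  have ha0 : 0 < a := ha ▸ ENNReal.toReal_pos hC0 hCfin.ne
  have hk0 : 0 < k := hk ▸ ENNReal.toReal_pos hK0 hKfin.ne
  have haC : μ C = ENNReal.ofReal a := by rw [ha, ENNReal.ofReal_toReal hCfin.ne]
  have hkK : μ Kᶜ = ENNReal.ofReal k := by rw [hk, ENNReal.ofReal_toReal hKfin.ne]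
  have haq : 0 < a ^ q := Real.rpow_pos_of_pos ha0 q
  have hkq : 0 < k ^ q := Real.rpow_pos_of_pos hk0 q
  have haqp : (a ^ q) ^ (1 / q) = a := by
    rw [← Real.rpow_mul ha0.le, mul_one_div_cancel hq.ne, Real.rpow_one]
  have hlim := ENNReal.tendsto_ofReal
    (tendsto_rpow_difference_quotient haq (k ^ q) (1 / q))
  rw [haqp, ← Real.rpow_mul ha0.le, mul_sub, mul_one_div_cancel hq.ne, mul_one] at hlim
  refine (ge_of_eq ((hlim.congr' ?_).liminf_eq)).trans' (le_of_eq ?_)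
  · filter_upwards [self_mem_nhdsWithin] with ε (hε : 0 < ε)
    have hsum : 0 < a ^ q + ε * k ^ q := by positivity
    rw [haC, hkK, ENNReal.ofReal_rpow_of_pos ha0, ENNReal.ofReal_rpow_of_pos hk0,
      ← ENNReal.ofReal_mul hε.le, ← ENNReal.ofReal_add haq.le (by positivity),
      ENNReal.ofReal_rpow_of_pos hsum, ← ENNReal.ofReal_sub _ (by positivity),
      ENNReal.ofReal_div_of_pos hε]
  · rw [haC, hkK, ENNReal.ofReal_rpow_of_pos ha0, ENNReal.ofReal_rpow_of_pos hk0,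
      ← ENNReal.ofReal_mul (by linarith),
      ← ENNReal.ofReal_mul (mul_nonneg (by linarith) hkq.le)]
    ring_nf

theorem mInnerBoundary_compl_smul {n : ℕ} {q : ℝ} (hq : q < 0) {μ : Measure (Fin n → ℝ)}
    (hhom : ∀ A : Set (Fin n → ℝ), MeasurableSet A → ∀ c : ℝ, 0 < c →
      μ (c • A) = ENNReal.ofReal (c ^ (1 / q)) * μ A)
    {K : Set (Fin n → ℝ)} (hK : IsOpen K) (hKconv : Convex ℝ K) (h0K : (0 : Fin n → ℝ) ∈ K)
    (hKfin : μ Kᶜ < ⊤) {t : ℝ} (ht : 0 < t) :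
    mInnerBoundary μ K ((t • K)ᶜ) =
      ENNReal.ofReal (-(1 / q)) * μ Kᶜ ^ q * μ ((t • K)ᶜ) ^ (1 - q) := by
  have hp : 1 / q < 0 := one_div_neg.2 hq
  have hdil : ∀ s : ℝ, 0 < s → μ (s • K)ᶜ = ENNReal.ofReal (s ^ (1 / q) * (μ Kᶜ).toReal) := by
    intro s hs
    rw [compl_smul_set_of_pos hs, hhom _ hK.measurableSet.compl s hs,
      ENNReal.ofReal_mul (by positivity), ENNReal.ofReal_toReal hKfin.ne]
  have hdiff : ∀ ε : ℝ, 0 < ε → μ ((t • K + ε • K) \ (t • K)) / ENNReal.ofReal ε =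
      ENNReal.ofReal ((t ^ (1 / q) - (t + ε * 1) ^ (1 / q)) / ε * (μ Kᶜ).toReal) := by
    intro ε hε
    have htε : 0 < t + ε := add_pos ht hε
    have hsub : ((t + ε) • K)ᶜ ⊆ (t • K)ᶜ := by
      rw [hKconv.add_smul ht.le hε.le]
      exact compl_subset_compl.2 fun x hx =>
        ⟨x, hx, 0, ⟨0, h0K, smul_zero ε⟩, add_zero x⟩
    have hset : (t • K + ε • K) \ (t • K) = (t • K)ᶜ \ ((t + ε) • K)ᶜ := by
      rw [hKconv.add_smul ht.le hε.le, compl_sdiff_compl]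
    rw [hset, measure_sdiff hsub (hK.smul₀ htε.ne').measurableSet.compl.nullMeasurableSet
      (by rw [hdil _ htε]; exact ENNReal.ofReal_ne_top), hdil t ht, hdil _ htε,
      ← ENNReal.ofReal_sub _ (by positivity), ← ENNReal.ofReal_div_of_pos hε, mul_one]
    ring_nf
  have hlim := ENNReal.tendsto_ofReal
    ((tendsto_rpow_difference_quotient ht 1 (1 / q)).mul_const (μ Kᶜ).toReal)
  have hliminf : mInnerBoundary μ K ((t • K)ᶜ) =
      ENNReal.ofReal (-(1 / q) * t ^ (1 / q - 1) * 1 * (μ Kᶜ).toReal) := by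
    rw [mInnerBoundary, mBoundary, compl_compl]
    refine (hlim.congr' ?_).liminf_eq
    filter_upwards [self_mem_nhdsWithin] with ε hε using (hdiff ε hε).symm
  rw [hliminf, hdil t ht]
  obtain hK0 | hK0 := eq_or_ne (μ Kᶜ) 0
  · simp [hK0, ENNReal.zero_rpow_of_pos (show 0 < 1 - q by linarith)]
  have hk0 : 0 < (μ Kᶜ).toReal := ENNReal.toReal_pos hK0 hKfin.ne
  obtain ⟨k, hk⟩ : ∃ k : ℝ, k = (μ Kᶜ).toReal := ⟨_, rfl⟩
  have hkK : μ Kᶜ = ENNReal.ofReal k := by rw [hk, ENNReal.ofReal_toReal hKfin.ne]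
  rw [← hk] at hk0 ⊢
  rw [hkK, ENNReal.ofReal_rpow_of_pos hk0, ENNReal.ofReal_rpow_of_pos (by positivity),
    ← ENNReal.ofReal_mul (by linarith), ← ENNReal.ofReal_mul (mul_nonneg (by linarith)
      (by positivity)), Real.mul_rpow (by positivity) hk0.le, ← Real.rpow_mul ht.le,
    mul_sub, one_div_mul_cancel hq.ne, mul_one (1 / q)]
  congr 1
  have hkk : k ^ q * k ^ (1 - q) = k := by
    rw [← Real.rpow_add hk0, add_sub_cancel, Real.rpow_one]
  linear_combination (1 / q * t ^ (1 / q - 1)) * hkk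

/-- if `μ` is `q`-complemented concave and `q`-homogeneous with `q < 0`, and
`‖·‖_K` is a semi-norm with open unit ball `K` such that `μ(ℝⁿ∖K) < ∞`, then
`μ⁻_K(C) ≥ -(1/q) μ(ℝⁿ∖K)^q μ(C)^{1-q}`, with equality for `C = ℝⁿ∖(tK)`, `t > 0`. -/
theorem stmt7 (n : ℕ) (hn : 1 ≤ n) (q : ℝ) (hq : q < 0)
    (μ : Measure (Fin n → ℝ))
    (hcc : ∀ lam ∈ Set.Ioo (0 : ℝ) 1, ∀ A B : Set (Fin n → ℝ),
      MeasurableSet A → MeasurableSet B → μ Aᶜ < ⊤ → μ Bᶜ < ⊤ →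
      innerMeasure μ ((lam • A + (1 - lam) • B)ᶜ) ≤
        (ENNReal.ofReal lam * μ Aᶜ ^ q + ENNReal.ofReal (1 - lam) * μ Bᶜ ^ q) ^ (1 / q))
    (hhom : ∀ A : Set (Fin n → ℝ), MeasurableSet A → ∀ c : ℝ, 0 < c →
      μ (c • A) = ENNReal.ofReal (c ^ (1 / q)) * μ A)
    (N : (Fin n → ℝ) → ℝ) (hN0 : ∀ x, 0 ≤ N x)
    (hNadd : ∀ x y, N (x + y) ≤ N x + N y)
    (hNhom : ∀ c : ℝ, 0 ≤ c → ∀ x, N (c • x) = c * N x)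
    (K : Set (Fin n → ℝ)) (hK : K = {x | N x < 1})
    (hKfin : μ Kᶜ < ⊤) :
    (∀ C : Set (Fin n → ℝ), MeasurableSet C → μ C < ⊤ →
      ENNReal.ofReal (-(1 / q)) * μ Kᶜ ^ q * μ C ^ (1 - q) ≤ mInnerBoundary μ K C) ∧
    (∀ t : ℝ, 0 < t →
      mInnerBoundary μ K ((t • K)ᶜ) =
        ENNReal.ofReal (-(1 / q)) * μ Kᶜ ^ q * μ ((t • K)ᶜ) ^ (1 - q)) := by
  have hconv : ConvexOn ℝ univ N := convexOn_univ_of_subadditive hNadd hNhom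
  have hcont : Continuous N := continuousOn_univ.1 (hconv.continuousOn isOpen_univ)
  have hKopen : IsOpen K := hK ▸ isOpen_lt hcont continuous_const
  have hKconv : Convex ℝ K := by simpa [hK] using hconv.convex_lt 1
  have hN00 : N 0 = 0 := by simpa using hNhom 0 le_rfl 0
  have hK0 : (0 : Fin n → ℝ) ∈ K := by simp [hK, hN00]
  exact ⟨fun C hC hCfin => mInnerBoundary_lower_bound hq hcc hhom hKopen hKfin hC hCfin,
    fun t ht => mInnerBoundary_compl_smul hq hhom hKopen hKconv hK0 hKfin ht⟩
end

section
/- Let n ≥ 1 and let q ∈ (−∞,0) ∪ (0,1]. If μ₁ and μ₂ are Borel measures on ℝⁿ that are both q-complemented concave, then for all c₁, c₂ > 0 the measure c₁·μ₁ + c₂·μ₂ is q-complemented concave; i.e., the class of q-complemented concave measures on ℝⁿ is a convex cone. -/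
open MeasureTheory Set Filter
open scoped Pointwise ENNReal

/-- A Borel measure `μ` on `ℝⁿ` is `q`-complemented concave (`q`-CC). -/
def IsQCC {n : ℕ} (q : ℝ) (μ : Measure (Fin n → ℝ)) : Prop :=
  ∀ lam ∈ Set.Ioo (0 : ℝ) 1, ∀ A B : Set (Fin n → ℝ),
    MeasurableSet A → MeasurableSet B → μ Aᶜ < ⊤ → μ Bᶜ < ⊤ →
    innerMeasure μ ((lam • A + (1 - lam) • B)ᶜ) ≤
      (ENNReal.ofReal lam * μ Aᶜ ^ q + ENNReal.ofReal (1 - lam) * μ Bᶜ ^ q) ^ (1 / q)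

/-- Convexity of `x ↦ x ^ q` on `(0, ∞)` for `q ≤ 0`. -/
lemma Real.add_rpow_le_of_nonpos {q s t x y : ℝ} (hq : q ≤ 0) (hs : 0 ≤ s) (ht : 0 ≤ t)
    (hst : s + t = 1) (hx : 0 < x) (hy : 0 < y) :
    (s * x + t * y) ^ q ≤ s * x ^ q + t * y ^ q :=
  calc (s * x + t * y) ^ q ≤ (x ^ s * y ^ t) ^ q :=
        Real.rpow_le_rpow_of_nonpos (by positivity)
          (Real.geom_mean_le_arith_mean2_weighted hs ht hx.le hy.le hst) hq
    _ = (x ^ q) ^ s * (y ^ q) ^ t := by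
        rw [Real.mul_rpow (by positivity) (by positivity), ← Real.rpow_mul hx.le,
          ← Real.rpow_mul hy.le, ← Real.rpow_mul hx.le, ← Real.rpow_mul hy.le, mul_comm s,
          mul_comm t]
    _ ≤ s * x ^ q + t * y ^ q :=
        Real.geom_mean_le_arith_mean2_weighted hs ht (by positivity) (by positivity) hst

lemma Real.add_rpow_le_mul_of_nonpos {q a b u v : ℝ} (hq : q ≤ 0) (ha : 0 < a) (hb : 0 < b)
    (hu : 0 < u) (hv : 0 < v) :
    (a + b) ^ q ≤ (u + v) ^ q * (u / (u + v) * (a ^ q / u ^ q) + v / (u + v) * (b ^ q / v ^ q)) := by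
  have h := Real.add_rpow_le_of_nonpos (s := u / (u + v)) (t := v / (u + v)) hq (by positivity)
    (by positivity) (by field_simp) (div_pos ha hu) (div_pos hb hv)
  rw [Real.div_rpow ha.le hu.le, Real.div_rpow hb.le hv.le] at h
  have h' : a + b = (u + v) * (u / (u + v) * (a / u) + v / (u + v) * (b / v)) := by
    field_simp
  rw [h', Real.mul_rpow (by positivity) (by positivity)]
  gcongr

/-- Reverse Minkowski inequality for weighted power means with a negative exponent. -/
lemma Real.powerMean_add_le_of_neg {q l m a₁ b₁ a₂ b₂ : ℝ} (hq : q < 0) (hl : 0 < l) (hm : 0 < m)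
    (ha₁ : 0 < a₁) (hb₁ : 0 < b₁) (ha₂ : 0 < a₂) (hb₂ : 0 < b₂) :
    (l * a₁ ^ q + m * b₁ ^ q) ^ (1 / q) + (l * a₂ ^ q + m * b₂ ^ q) ^ (1 / q) ≤
      (l * (a₁ + a₂) ^ q + m * (b₁ + b₂) ^ q) ^ (1 / q) := by
  set u := (l * a₁ ^ q + m * b₁ ^ q) ^ (1 / q) with hu_def
  set v := (l * a₂ ^ q + m * b₂ ^ q) ^ (1 / q) with hv_def
  have hu : 0 < u := by positivity
  have hv : 0 < v := by positivity
  have huq : u ^ q = l * a₁ ^ q + m * b₁ ^ q := by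
    rw [hu_def, one_div, Real.rpow_inv_rpow (by positivity) hq.ne]
  have hvq : v ^ q = l * a₂ ^ q + m * b₂ ^ q := by
    rw [hv_def, one_div, Real.rpow_inv_rpow (by positivity) hq.ne]
  have huq0 : 0 < u ^ q := by positivity
  have hvq0 : 0 < v ^ q := by positivity
  rw [one_div, Real.le_rpow_inv_iff_of_neg (by positivity) (by positivity) hq]
  calc l * (a₁ + a₂) ^ q + m * (b₁ + b₂) ^ q
      ≤ l * ((u + v) ^ q * (u / (u + v) * (a₁ ^ q / u ^ q) + v / (u + v) * (a₂ ^ q / v ^ q))) +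
        m * ((u + v) ^ q * (u / (u + v) * (b₁ ^ q / u ^ q) + v / (u + v) * (b₂ ^ q / v ^ q))) := by
        gcongr <;> exact Real.add_rpow_le_mul_of_nonpos hq.le ‹_› ‹_› hu hv
    _ = (u + v) ^ q * (u / (u + v) * ((l * a₁ ^ q + m * b₁ ^ q) / u ^ q) +
          v / (u + v) * ((l * a₂ ^ q + m * b₂ ^ q) / v ^ q)) := by ring
    _ = (u + v) ^ q := by
        rw [← huq, ← hvq, div_self huq0.ne', div_self hvq0.ne', mul_one, mul_one, ← add_div,
          div_self (by positivity), mul_one]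

/-- Reverse Minkowski inequality for weighted power means with exponent in `(0, 1]`. -/
lemma ENNReal.powerMean_add_le_of_pos {q : ℝ} (hq : 0 < q) (hq1 : q ≤ 1)
    (l m a₁ b₁ a₂ b₂ : ℝ≥0∞) :
    (l * a₁ ^ q + m * b₁ ^ q) ^ (1 / q) + (l * a₂ ^ q + m * b₂ ^ q) ^ (1 / q) ≤
      (l * (a₁ + a₂) ^ q + m * (b₁ + b₂) ^ q) ^ (1 / q) := by
  have hp : 0 ≤ 1 / q := by positivity
  have norm_eq (l a b : ℝ≥0∞) :
      ((l * a ^ q) ^ (1 / q) + (l * b ^ q) ^ (1 / q)) ^ q = l * (a + b) ^ q := by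
    rw [ENNReal.mul_rpow_of_nonneg _ _ hp, ENNReal.mul_rpow_of_nonneg _ _ hp, one_div,
      ENNReal.rpow_rpow_inv hq.ne', ENNReal.rpow_rpow_inv hq.ne', ← mul_add,
      ENNReal.mul_rpow_of_nonneg _ _ hq.le, ENNReal.rpow_inv_rpow hq.ne']
  have h := ENNReal.Lp_add_le Finset.univ ![l * a₁ ^ q, l * a₂ ^ q] ![m * b₁ ^ q, m * b₂ ^ q]
    ((one_le_div hq).2 hq1)
  simp only [Fin.sum_univ_two, Matrix.cons_val_zero, Matrix.cons_val_one,
    one_div_one_div, norm_eq] at h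
  rwa [one_div, ENNReal.le_rpow_inv_iff hq, ← one_div]

lemma ENNReal.powerMean_mono {q : ℝ} (l m : ℝ≥0∞) {a b a' b' : ℝ≥0∞} (hq : q < 0)
    (ha : a ≤ a') (hb : b ≤ b') :
    (l * a ^ q + m * b ^ q) ^ (1 / q) ≤ (l * a' ^ q + m * b' ^ q) ^ (1 / q) := by
  have anti {r : ℝ} (hr : r < 0) {x y : ℝ≥0∞} (hxy : x ≤ y) : y ^ r ≤ x ^ r := by
    rw [← neg_neg r, ENNReal.rpow_neg y, ENNReal.rpow_neg x, ENNReal.inv_le_inv]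
    exact ENNReal.rpow_le_rpow hxy (neg_nonneg.2 hr.le)
  exact anti (one_div_neg.2 hq) (add_le_add (mul_le_mul_right (anti hq ha) l)
    (mul_le_mul_right (anti hq hb) m))

/-- Reverse Minkowski inequality for weighted power means with a negative exponent. -/
lemma ENNReal.powerMean_add_le_of_neg {q l m : ℝ} (hq : q < 0) (hl : 0 < l) (hm : 0 < m)
    {a₁ b₁ a₂ b₂ : ℝ≥0∞} (ha₁ : a₁ ≠ ⊤) (hb₁ : b₁ ≠ ⊤) (ha₂ : a₂ ≠ ⊤) (hb₂ : b₂ ≠ ⊤) :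
    (ENNReal.ofReal l * a₁ ^ q + ENNReal.ofReal m * b₁ ^ q) ^ (1 / q) +
      (ENNReal.ofReal l * a₂ ^ q + ENNReal.ofReal m * b₂ ^ q) ^ (1 / q) ≤
      (ENNReal.ofReal l * (a₁ + a₂) ^ q + ENNReal.ofReal m * (b₁ + b₂) ^ q) ^ (1 / q) := by
  have hq' : q⁻¹ < 0 := inv_lt_zero.2 hq
  have mean_zero {a b : ℝ≥0∞} (h : a = 0 ∨ b = 0) :
      (ENNReal.ofReal l * a ^ q + ENNReal.ofReal m * b ^ q) ^ (1 / q) = 0 := by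
    rcases h with rfl | rfl <;>
      simp [ENNReal.zero_rpow_of_neg hq, ENNReal.mul_top, hl, hm, ENNReal.top_rpow_of_neg hq']
  by_cases h₁ : a₁ = 0 ∨ b₁ = 0
  · rw [mean_zero h₁, zero_add]
    exact ENNReal.powerMean_mono _ _ hq le_add_self le_add_self
  by_cases h₂ : a₂ = 0 ∨ b₂ = 0
  · rw [mean_zero h₂, add_zero]
    exact ENNReal.powerMean_mono _ _ hq le_self_add le_self_add
  push Not at h₁ h₂
  have mean_ofReal {a b : ℝ} (ha : 0 < a) (hb : 0 < b) :
      (ENNReal.ofReal l * ENNReal.ofReal a ^ q + ENNReal.ofReal m * ENNReal.ofReal b ^ q) ^ (1 / q)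
        = ENNReal.ofReal ((l * a ^ q + m * b ^ q) ^ (1 / q)) := by
    rw [ENNReal.ofReal_rpow_of_pos ha, ENNReal.ofReal_rpow_of_pos hb, ← ENNReal.ofReal_mul hl.le,
      ← ENNReal.ofReal_mul hm.le, ← ENNReal.ofReal_add (by positivity) (by positivity),
      ENNReal.ofReal_rpow_of_pos (by positivity)]
  have A₁ := ENNReal.toReal_pos h₁.1 ha₁
  have B₁ := ENNReal.toReal_pos h₁.2 hb₁
  have A₂ := ENNReal.toReal_pos h₂.1 ha₂
  have B₂ := ENNReal.toReal_pos h₂.2 hb₂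
  rw [← ENNReal.ofReal_toReal ha₁, ← ENNReal.ofReal_toReal hb₁, ← ENNReal.ofReal_toReal ha₂,
    ← ENNReal.ofReal_toReal hb₂, ← ENNReal.ofReal_add A₁.le A₂.le, ← ENNReal.ofReal_add B₁.le B₂.le,
    mean_ofReal A₁ B₁, mean_ofReal A₂ B₂, mean_ofReal (by positivity) (by positivity),
    ← ENNReal.ofReal_add (by positivity) (by positivity)]
  exact ENNReal.ofReal_le_ofReal (Real.powerMean_add_le_of_neg hq hl hm A₁ B₁ A₂ B₂)

lemma ENNReal.mul_powerMean {q : ℝ} (hq : q ≠ 0) {c : ℝ≥0∞} (hc0 : c ≠ 0) (hc : c ≠ ⊤)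
    (l m a b : ℝ≥0∞) :
    c * (l * a ^ q + m * b ^ q) ^ (1 / q) = (l * (c * a) ^ q + m * (c * b) ^ q) ^ (1 / q) := by
  have mul_rpow {c : ℝ≥0∞} (hc0 : c ≠ 0) (hc : c ≠ ⊤) (x : ℝ≥0∞) (r : ℝ) :
      (c * x) ^ r = c ^ r * x ^ r := by
    simp [ENNReal.mul_rpow_eq_ite, hc0, hc]
  rw [mul_rpow hc0 hc, mul_rpow hc0 hc, mul_left_comm l, mul_left_comm m, ← mul_add,
    mul_rpow (by simp [ENNReal.rpow_eq_zero_iff, hc0, hc])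
      (by simp [ENNReal.rpow_eq_top_iff, hc0, hc]),
    one_div, ENNReal.rpow_rpow_inv hq]

lemma innerMeasure_add_le {α : Type*} [MeasurableSpace α] (μ ν : Measure α) (S : Set α) :
    innerMeasure (μ + ν) S ≤ innerMeasure μ S + innerMeasure ν S :=
  iSup_le fun F => iSup_le fun hF => iSup_le fun hFS =>
    add_le_add (le_iSup₂_of_le F hF (le_iSup_of_le hFS le_rfl))
      (le_iSup₂_of_le F hF (le_iSup_of_le hFS le_rfl))

lemma innerMeasure_smul {α : Type*} [MeasurableSpace α] (c : ℝ≥0∞) (μ : Measure α) (S : Set α) :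
    innerMeasure (c • μ) S = c * innerMeasure μ S := by
  simp only [innerMeasure, ENNReal.mul_iSup, Measure.smul_apply, smul_eq_mul]

lemma IsQCC.smul {n : ℕ} {q : ℝ} (hq : q ≠ 0) {μ : Measure (Fin n → ℝ)} (h : IsQCC q μ)
    {c : ℝ≥0∞} (hc0 : c ≠ 0) (hc : c ≠ ⊤) : IsQCC q (c • μ) := by
  intro lam hlam A B hA hB hμA hμB
  simp only [Measure.smul_apply, smul_eq_mul] at hμA hμB ⊢
  rw [innerMeasure_smul, ← ENNReal.mul_powerMean hq hc0 hc]
  gcongr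
  exact h lam hlam A B hA hB (ENNReal.lt_top_of_mul_ne_top_right hμA.ne hc0)
    (ENNReal.lt_top_of_mul_ne_top_right hμB.ne hc0)

lemma IsQCC.add {n : ℕ} {q : ℝ} (hq0 : q ≠ 0) (hq1 : q ≤ 1) {μ ν : Measure (Fin n → ℝ)}
    (hμ : IsQCC q μ) (hν : IsQCC q ν) : IsQCC q (μ + ν) := by
  intro lam hlam A B hA hB hA' hB'
  simp only [Measure.add_apply, ENNReal.add_lt_top] at hA' hB' ⊢
  refine (innerMeasure_add_le _ _ _).trans ((add_le_add (hμ lam hlam A B hA hB hA'.1 hB'.1)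
    (hν lam hlam A B hA hB hA'.2 hB'.2)).trans ?_)
  rcases hq0.lt_or_gt with hq | hq
  · exact ENNReal.powerMean_add_le_of_neg hq hlam.1 (sub_pos.2 hlam.2) hA'.1.ne hB'.1.ne
      hA'.2.ne hB'.2.ne
  · exact ENNReal.powerMean_add_le_of_pos hq hq1 ..

/-- for `q ∈ (-∞,0) ∪ (0,1]`, the class of `q`-complemented concave measures
on `ℝⁿ` is a convex cone: positive combinations of `q`-CC measures are `q`-CC. -/
theorem stmt8 (n : ℕ) (hn : 1 ≤ n) (q : ℝ) (hq : q ∈ Set.Iio (0 : ℝ) ∪ Set.Ioc (0 : ℝ) 1)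
    (μ₁ μ₂ : Measure (Fin n → ℝ)) (h₁ : IsQCC q μ₁) (h₂ : IsQCC q μ₂)
    (c₁ c₂ : ℝ) (hc₁ : 0 < c₁) (hc₂ : 0 < c₂) :
    IsQCC q (ENNReal.ofReal c₁ • μ₁ + ENNReal.ofReal c₂ • μ₂) := by
  have hq0 : q ≠ 0 := by
    rcases hq with hq | hq
    exacts [hq.ne, hq.1.ne']
  have hq1 : q ≤ 1 := by
    rcases hq with hq | hq
    exacts [hq.le.trans zero_le_one, hq.2]
  exact (h₁.smul hq0 (ENNReal.ofReal_pos.2 hc₁).ne' ENNReal.ofReal_ne_top).add hq0 hq1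
    (h₂.smul hq0 (ENNReal.ofReal_pos.2 hc₂).ne' ENNReal.ofReal_ne_top)
end

section
/- Let n ≥ 1 and let μ be a finite Borel measure on ℝⁿ. Then the following are equivalent: (i) for all λ ∈ (0,1) and all Borel sets A, B ⊆ ℝⁿ, μ_*(ℝⁿ∖(λA+(1−λ)B)) ≤ max(μ(ℝⁿ∖A), μ(ℝⁿ∖B)) (μ is ∞-complemented concave); (ii) for all λ ∈ (0,1) and all Borel sets A, B ⊆ ℝⁿ with μ(A)·μ(B) > 0, μ_*(λA+(1−λ)B) ≥ min(μ(A), μ(B)) (μ is −∞-concave). -/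
open MeasureTheory Set Filter
open scoped Pointwise ENNReal

theorem measure_le_innerMeasure {α : Type*} [MeasurableSpace α] (μ : Measure α) {F S : Set α}
    (hF : MeasurableSet F) (hFS : F ⊆ S) : μ F ≤ innerMeasure μ S :=
  le_iSup₂_of_le F hF (le_iSup_of_le hFS le_rfl)

theorem innerMeasure_le_iff {α : Type*} [MeasurableSpace α] {μ : Measure α} {S : Set α}
    {c : ℝ≥0∞} : innerMeasure μ S ≤ c ↔ ∀ F, MeasurableSet F → F ⊆ S → μ F ≤ c := by
  simp only [innerMeasure, iSup_le_iff]

theorem measure_le_of_measure_compl_le {α : Type*} [MeasurableSpace α] {μ : Measure α}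
    [IsFiniteMeasure μ] {S T : Set α} (hS : MeasurableSet S) (hT : MeasurableSet T)
    (h : μ Sᶜ ≤ μ Tᶜ) : μ T ≤ μ S := by
  refine ENNReal.le_of_add_le_add_right (measure_ne_top μ Tᶜ) ?_
  rw [measure_add_measure_compl hT, ← measure_add_measure_compl hS]
  gcongr

/-- The inner measures of a set and of its complement add up to at most the total mass. -/
theorem measure_add_innerMeasure_le_univ {α : Type*} [MeasurableSpace α] (μ : Measure α)
    [IsFiniteMeasure μ] {F S : Set α} (hF : MeasurableSet F) (hFS : F ⊆ Sᶜ) :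
    μ F + innerMeasure μ S ≤ μ univ := by
  have h : innerMeasure μ S ≤ μ Fᶜ :=
    innerMeasure_le_iff.2 fun G _ hGS =>
      measure_mono fun x hx hxF => hFS hxF (hGS hx)
  calc μ F + innerMeasure μ S ≤ μ F + μ Fᶜ := by gcongr
    _ = μ univ := measure_add_measure_compl hF

/-- for a finite Borel measure `μ` on `ℝⁿ`, being `∞`-complemented concave
is equivalent to being `−∞`-concave. -/
theorem stmt10 (n : ℕ) (hn : 1 ≤ n) (μ : Measure (Fin n → ℝ)) (hfin : μ Set.univ < ⊤) :
    (∀ lam ∈ Set.Ioo (0 : ℝ) 1, ∀ A B : Set (Fin n → ℝ),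
        MeasurableSet A → MeasurableSet B →
        innerMeasure μ ((lam • A + (1 - lam) • B)ᶜ) ≤ max (μ Aᶜ) (μ Bᶜ)) ↔
    (∀ lam ∈ Set.Ioo (0 : ℝ) 1, ∀ A B : Set (Fin n → ℝ),
        MeasurableSet A → MeasurableSet B → 0 < μ A * μ B →
        min (μ A) (μ B) ≤ innerMeasure μ (lam • A + (1 - lam) • B)) := by
  have : IsFiniteMeasure μ := ⟨hfin⟩
  constructor
  · intro h lam hlam A B hA hB _
    refine le_of_forall_lt fun c hc => ?_
    obtain ⟨hcA, hcB⟩ := lt_min_iff.1 hc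
    obtain ⟨K, hKA, hK, hcK⟩ := hA.exists_lt_isCompact hcA
    obtain ⟨L, hLB, hL, hcL⟩ := hB.exists_lt_isCompact hcB
    have hC : MeasurableSet (lam • K + (1 - lam) • L) :=
      ((hK.smul lam).add (hL.smul (1 - lam))).measurableSet
    have hle := (measure_le_innerMeasure μ hC.compl subset_rfl).trans
      (h lam hlam K L hK.measurableSet hL.measurableSet)
    have hcC : c < μ (lam • K + (1 - lam) • L) := by
      rcases le_max_iff.1 hle with hle | hle
      · exact hcK.trans_le (measure_le_of_measure_compl_le hC hK.measurableSet hle)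
      · exact hcL.trans_le (measure_le_of_measure_compl_le hC hL.measurableSet hle)
    exact hcC.trans_le (measure_le_innerMeasure μ hC
      (add_subset_add (smul_set_mono hKA) (smul_set_mono hLB)))
  · intro h lam hlam A B hA hB
    refine innerMeasure_le_iff.2 fun F hF hFC => ?_
    have hmin : min (μ A) (μ B) ≤ innerMeasure μ (lam • A + (1 - lam) • B) := by
      rcases eq_or_ne (μ A * μ B) 0 with h0 | h0
      · rcases mul_eq_zero.1 h0 with h0 | h0 <;> simp [h0]
      · exact h lam hlam A B hA hB (pos_iff_ne_zero.2 h0)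
    have hadd : μ F + min (μ A) (μ B) ≤ μ univ :=
      le_trans (by gcongr) (measure_add_innerMeasure_le_univ μ hF hFC)
    rcases min_choice (μ A) (μ B) with hm | hm <;> rw [hm] at hadd
    · refine le_max_of_le_left ?_
      rw [measure_compl hA (measure_ne_top μ A)]
      exact ENNReal.le_sub_of_add_le_right (measure_ne_top μ A) hadd
    · refine le_max_of_le_right ?_
      rw [measure_compl hB (measure_ne_top μ B)]
      exact ENNReal.le_sub_of_add_le_right (measure_ne_top μ B) hadd
end
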